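/- arXiv:2603.09008 — 3 statements merged into one kernel-verified Lean document; each statement's English description precedes it below -/
import Mathlib

section
/- Fix a constant c > 0. For each n, let F^{⌊cn⌋}_n be the number of fixed points of the random permutation of [n] obtained by performing r = ⌊cn⌋ iterated random-to-top shuffles starting from the identity. Then F^{⌊cn⌋}_n converges in distribution, as n → ∞, to X + Y, where X and Y are independent, X is Poisson with mean 1 − e^{−c}, and Y is geometric with P(Y = k) = (1 − e^{−c}) e^{−ck} for all integers k ≥ 0. Equivalently, for every integer ℓ ≥ 0, P(F^{⌊cn⌋}_n = ℓ) → Σ_{j=0}^{ℓ} (1 − e^{−c}) e^{−cj} · e^{−(1−e^{−c})} (1 − e^{−c})^{ℓ−j} / (ℓ−j)! as n → ∞. -/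
open MeasureTheory ProbabilityTheory Filter Finset Topology
open scoped NNReal

/-- Move card `c` to the top (position `0`) of the deck `π`
(where `π i` is the card in position `i`). -/
def moveToTop {n : ℕ} (c : Fin n) (π : Equiv.Perm (Fin n)) : Equiv.Perm (Fin n) :=
  π * ((π⁻¹ c).cycleRange)⁻¹

/-- The permutation (position `i` ↦ card in position `i`) obtained after performing
iterated random-to-top moves with selected cards `s 0, s 1, …`, starting from the
identity deck `(1, 2, …, n)`. -/
def rttPerm (n r : ℕ) (s : Fin r → Fin n) : Equiv.Perm (Fin n) :=
  (List.ofFn s).foldl (fun π c => moveToTop c π) 1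

/-- Number of fixed points of a permutation. -/
def fixedPointCount {n : ℕ} (π : Equiv.Perm (Fin n)) : ℕ :=
  (Finset.univ.filter fun i => π i = i).card

/-- Number of descents of a permutation. -/
def descentCount {n : ℕ} (π : Equiv.Perm (Fin n)) : ℕ :=
  (Finset.univ.filter fun p : Fin n × Fin n =>
    (p.1 : ℕ) + 1 = (p.2 : ℕ) ∧ π p.2 < π p.1).card

/-- Number of inversions of a permutation. -/
def inversionCount {n : ℕ} (π : Equiv.Perm (Fin n)) : ℕ :=
  (Finset.univ.filter fun p : Fin n × Fin n => p.1 < p.2 ∧ π p.2 < π p.1).card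

/-- The number of distinct values among `s 0, …, s (r-1)` (the occupancy count `K^r_n`). -/
def distinctCount (n r : ℕ) (s : Fin r → Fin n) : ℕ :=
  (Finset.univ.image s).card

/-- Probability of the event `p` under the uniform distribution on the finite type `α`. -/
noncomputable def unifProb {α : Type*} [Fintype α] (p : α → Prop) : ℝ :=
  (Nat.card {x : α // p x} : ℝ) / (Fintype.card α : ℝ)

/-- Expectation of `f` under the uniform distribution on the finite type `α`. -/
noncomputable def unifExpect {α : Type*} [Fintype α] (f : α → ℝ) : ℝ :=
  (∑ x, f x) / (Fintype.card α : ℝ)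

/-- Variance of `f` under the uniform distribution on the finite type `α`. -/
noncomputable def unifVar {α : Type*} [Fintype α] (f : α → ℝ) : ℝ :=
  unifExpect fun x => (f x - unifExpect f) ^ 2

/-- `max_{1 ≤ i ≤ k} π(i)`: the maximum card value (in `{1, …, n}`, i.e. `val + 1`)
among the first `k` positions of `π`. -/
def maxFirst (n k : ℕ) (π : Equiv.Perm (Fin n)) : ℕ :=
  (Finset.univ.filter fun i : Fin n => (i : ℕ) < k).sup fun i => (π i : ℕ) + 1

/-- The number of fixed points among the first `k` positions of `π`. -/
def fixedFirst (n k : ℕ) (π : Equiv.Perm (Fin n)) : ℕ :=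
  (Finset.univ.filter fun i : Fin n => (i : ℕ) < k ∧ π i = i).card

open scoped BigOperators

/-!
After the shuffles the deck consists of the `K` distinct selected cards, most recently selected
first, followed by the other cards in increasing order. Given which selections coincide, the top
`K` cards are a uniform injective sequence, so the number of fixed points is distributed as
`fixedFirst n K σ + topGap n K σ` with `σ` a uniform permutation independent of `K`: a position
beyond `K` is fixed exactly when its card is larger than all of the top `K` cards.

For `k / n → p`, counting permutations gives the joint factorial moments
`E[choose (fixedFirst) j · 1{t ≤ topGap}] → (1 - p) ^ t * p ^ j / j!`, whence `fixedFirst` and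
`topGap` become independent, Poisson and geometric. Finally `K / n → 1 - exp (-c)` in mean square,
from the binomial moments of the number of unselected cards.
-/

/-! ### The shuffled deck as a list -/

section Deck

variable {n : ℕ}

lemma ofFn_moveToTop (c : Fin n) (π : Equiv.Perm (Fin n)) :
    List.ofFn (moveToTop c π) = c :: (List.ofFn π).erase c := by
  obtain _ | m := n
  · exact c.elim0
  obtain ⟨p, rfl⟩ := π.surjective c
  have herase : (List.ofFn π).erase (π p) = (List.ofFn π).eraseIdx p := by
    have h := (List.nodup_ofFn.2 π.injective).erase_getElem (p : ℕ) (by simp [p.is_le])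
    rwa [List.getElem_ofFn] at h
  have htop : moveToTop (π p) π 0 = π p := by
    simp [moveToTop, Equiv.Perm.inv_def (Fin.cycleRange _)]
  have hsucc (i : Fin m) : moveToTop (π p) π i.succ = π (p.succAbove i) := by
    simp [moveToTop, Equiv.Perm.inv_def (Fin.cycleRange _)]
  rw [herase, List.ofFn_succ, htop]
  congr 1
  refine List.ext_getElem (by simp [List.length_eraseIdx, p.is_le]) fun i _ _ => ?_
  simp only [List.getElem_ofFn, List.getElem_eraseIdx, hsucc]
  split_ifs with h <;> simp [Fin.succAbove, Fin.lt_def, h]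

lemma ofFn_foldl_moveToTop (l : List (Fin n)) (π : Equiv.Perm (Fin n)) :
    List.ofFn (l.foldl (fun ρ c => moveToTop c ρ) π : Equiv.Perm (Fin n)) =
      l.dedup.reverse ++ (List.ofFn π).filter (· ∉ l) := by
  induction l generalizing π with
  | nil => simp
  | cons c l ih =>
    have hnodup : (List.ofFn π).Nodup := List.nodup_ofFn.2 π.injective
    have hfilter : ((List.ofFn π).erase c).filter (· ∉ l) =
        (List.ofFn π).filter (· ∉ c :: l) := by
      rw [hnodup.erase_eq_filter, List.filter_filter]
      exact List.filter_congr fun x _ => by by_cases x = c <;> simp_all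
    rw [List.foldl_cons, ih, ofFn_moveToTop, List.filter_cons, hfilter]
    by_cases hc : c ∈ l <;> simp [hc]

variable {r : ℕ}

lemma ofFn_rttPerm (s : Fin r → Fin n) :
    List.ofFn (rttPerm n r s) =
      (List.ofFn s).dedup.reverse ++ (List.finRange n).filter (· ∉ List.ofFn s) := by
  rw [rttPerm, ofFn_foldl_moveToTop]
  rfl

lemma length_dedup_ofFn (s : Fin r → Fin n) :
    (List.ofFn s).dedup.length = distinctCount n r s := by
  rw [distinctCount, ← List.card_toFinset]
  congr 1
  ext
  simp

lemma distinctCount_le (s : Fin r → Fin n) : distinctCount n r s ≤ n :=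
  (Finset.card_le_univ _).trans_eq (Fintype.card_fin n)

lemma distinctCount_perm_comp (σ : Equiv.Perm (Fin n)) (s : Fin r → Fin n) :
    distinctCount n r (σ ∘ s) = distinctCount n r s := by
  rw [distinctCount, ← Finset.image_image, Finset.card_image_of_injective _ σ.injective]
  rfl

lemma rttPerm_apply_of_lt {s : Fin r → Fin n} {i : Fin n} (hi : (i : ℕ) < distinctCount n r s) :
    rttPerm n r s i = (List.ofFn s).dedup.reverse[(i : ℕ)]'(by simpa [length_dedup_ofFn]) := by
  have h := List.getElem_of_eq (ofFn_rttPerm s) (i := i) (by simp)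
  rwa [List.getElem_ofFn, List.getElem_append_left (by simpa [length_dedup_ofFn])] at h

lemma rttPerm_perm_comp_apply_of_lt (σ : Equiv.Perm (Fin n)) {s : Fin r → Fin n} {i : Fin n}
    (hi : (i : ℕ) < distinctCount n r s) :
    rttPerm n r (σ ∘ s) i = σ (rttPerm n r s i) := by
  rw [rttPerm_apply_of_lt hi, rttPerm_apply_of_lt ((distinctCount_perm_comp σ s).symm ▸ hi)]
  simp [← List.map_ofFn, List.dedup_map_of_injective σ.injective, ← List.map_reverse]

lemma strictMonoOn_rttPerm (s : Fin r → Fin n) :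
    StrictMonoOn (rttPerm n r s) {i | distinctCount n r s ≤ i} := by
  intro i hi j hj hij
  have hrest : ((List.finRange n).filter (· ∉ List.ofFn s)).Pairwise (· < ·) :=
    (List.pairwise_lt_finRange n).filter _
  have happly {i : Fin n} (hi : distinctCount n r s ≤ i) := by
    have h := List.getElem_of_eq (ofFn_rttPerm s) (i := i) (by simp)
    rwa [List.getElem_ofFn, List.getElem_append_right (by simpa [length_dedup_ofFn])] at h
  have hlt : (i : ℕ) - distinctCount n r s < j - distinctCount n r s :=
    Nat.sub_lt_sub_right hi hij
  simp only [Set.mem_ofPred_eq, Fin.eta, List.length_reverse, length_dedup_ofFn] at hi hj happly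
  rw [happly hi, happly hj]
  exact List.pairwise_iff_getElem.1 hrest _ _ _ _ hlt

end Deck

/-! ### Fixed points of a permutation increasing beyond position `k` -/

section FixedPoints

variable {n k : ℕ}

/-- The number of cards larger than every card in the first `k` positions of `π`. For a deck
that increases beyond position `k` these are its fixed points there. -/
def topGap (n k : ℕ) (π : Equiv.Perm (Fin n)) : ℕ :=
  n - maxFirst n k π

lemma card_filter_not_val_lt (m : ℕ) : #{i : Fin n | ¬ (i : ℕ) < m} = n - m := by
  rw [Finset.filter_not, Finset.card_sdiff_of_subset (Finset.filter_subset _ _),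
    Finset.card_univ, Fintype.card_fin, Fin.card_filter_val_lt]
  omega

lemma maxFirst_le_iff {π : Equiv.Perm (Fin n)} {m : ℕ} :
    maxFirst n k π ≤ m ↔ ∀ i : Fin n, (i : ℕ) < k → (π i : ℕ) < m := by
  simp [maxFirst]

lemma maxFirst_le (π : Equiv.Perm (Fin n)) : maxFirst n k π ≤ n :=
  maxFirst_le_iff.2 fun i _ => (π i).isLt

lemma le_topGap_iff {π : Equiv.Perm (Fin n)} {t : ℕ} (ht : t ≤ n) :
    t ≤ topGap n k π ↔ ∀ i : Fin n, (i : ℕ) < k → (π i : ℕ) < n - t := by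
  rw [← maxFirst_le_iff, topGap]
  have := maxFirst_le (k := k) π
  omega

lemma apply_eq_self_iff_of_strictMonoOn_Ici {π : Equiv.Perm (Fin n)} {a : Fin n}
    (h : StrictMonoOn π (Set.Ici a)) : π a = a ↔ ∀ j < a, π j < π a := by
  have hIoi : (Finset.Ioi a).map π.toEmbedding ⊆ Finset.Ioi (π a) := by
    intro v hv
    obtain ⟨j, hj, rfl⟩ := Finset.mem_map.1 hv
    have hj : a < j := Finset.mem_Ioi.1 hj
    exact Finset.mem_Ioi.2 (h Set.self_mem_Ici hj.le hj)
  constructor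
  · intro ha j hj
    have hIoi_eq := Finset.eq_of_subset_of_card_le hIoi (by simp [ha])
    refine lt_of_le_of_ne (not_lt.1 fun hlt => ?_) (π.injective.ne hj.ne)
    rw [← Finset.mem_Ioi, ← hIoi_eq] at hlt
    exact hj.not_gt (by simpa using hlt)
  · intro hj
    have hIio : (Finset.Iio a).map π.toEmbedding ⊆ Finset.Iio (π a) := by
      intro v hv
      obtain ⟨j, hja, rfl⟩ := Finset.mem_map.1 hv
      exact Finset.mem_Iio.2 (hj j (Finset.mem_Iio.1 hja))
    have hle := Finset.card_le_card hIio
    have hge := Finset.card_le_card hIoi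
    simp only [Finset.card_map, Fin.card_Iio, Fin.card_Ioi] at hle hge
    ext
    omega

lemma le_and_apply_eq_self_iff {π : Equiv.Perm (Fin n)}
    (h : StrictMonoOn π {i | k ≤ i}) (a : Fin n) :
    k ≤ a ∧ π a = a ↔ ∀ j : Fin n, (j : ℕ) < k → π j < π a := by
  by_cases ha : k ≤ a
  · have hIci : Set.Ici a ⊆ {i | k ≤ i} := fun i hi => ha.trans hi
    rw [and_iff_right ha, apply_eq_self_iff_of_strictMonoOn_Ici (h.mono hIci)]
    refine ⟨fun hlt j hj => hlt j (hj.trans_le ha), fun hlt j hj => ?_⟩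
    exact (lt_or_ge (j : ℕ) k).elim (hlt j) fun hkj => h hkj ha hj
  · simp only [ha, false_and, false_iff, not_forall]
    exact ⟨a, not_le.1 ha, lt_irrefl _⟩

lemma card_filter_forall_lt_eq_topGap (π : Equiv.Perm (Fin n)) :
    #{a | ∀ j : Fin n, (j : ℕ) < k → π j < π a} = topGap n k π := by
  rw [topGap, ← card_filter_not_val_lt]
  refine Finset.card_equiv π fun a => ?_
  simp [maxFirst_le_iff, not_lt]

lemma fixedPointCount_eq_fixedFirst_add_topGap {π : Equiv.Perm (Fin n)}
    (h : StrictMonoOn π {i | k ≤ i}) :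
    fixedPointCount π = fixedFirst n k π + topGap n k π := by
  rw [← card_filter_forall_lt_eq_topGap, fixedPointCount, fixedFirst]
  simp only [← le_and_apply_eq_self_iff h, ← not_lt]
  rw [← Finset.filter_filter, ← Finset.filter_filter, Finset.filter_comm,
    Finset.filter_comm (fun i : Fin n => ¬ (i : ℕ) < k),
    Finset.card_filter_add_card_filter_not]

lemma fixedFirst_congr {π ρ : Equiv.Perm (Fin n)} (h : ∀ i : Fin n, (i : ℕ) < k → π i = ρ i) :
    fixedFirst n k π = fixedFirst n k ρ := by
  unfold fixedFirst
  congr 1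
  exact Finset.filter_congr fun i _ => and_congr_right fun hi => by rw [h i hi]

lemma topGap_congr {π ρ : Equiv.Perm (Fin n)} (h : ∀ i : Fin n, (i : ℕ) < k → π i = ρ i) :
    topGap n k π = topGap n k ρ := by
  unfold topGap maxFirst
  congr 1
  exact Finset.sup_congr rfl fun i hi => by rw [h i (Finset.mem_filter.1 hi).2]

lemma fixedPointCount_rttPerm_perm_comp {r : ℕ} (σ : Equiv.Perm (Fin n)) (s : Fin r → Fin n) :
    fixedPointCount (rttPerm n r (σ ∘ s)) =
      fixedFirst n (distinctCount n r s) (σ * rttPerm n r s) +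
        topGap n (distinctCount n r s) (σ * rttPerm n r s) := by
  have hagree (i : Fin n) (hi : (i : ℕ) < distinctCount n r s) :
      rttPerm n r (σ ∘ s) i = (σ * rttPerm n r s) i :=
    rttPerm_perm_comp_apply_of_lt σ hi
  rw [fixedPointCount_eq_fixedFirst_add_topGap (strictMonoOn_rttPerm (σ ∘ s)),
    distinctCount_perm_comp, fixedFirst_congr hagree, topGap_congr hagree]

end FixedPoints

/-! ### Uniform averages -/

section Averages

lemma unifProb_eq_expect {α : Type*} [Fintype α] (p : α → Prop) [DecidablePred p] :
    unifProb p = 𝔼 x, if p x then (1 : ℝ) else 0 := by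
  rw [unifProb, Fintype.expect_eq_sum_div_card, Finset.sum_boole, Nat.card_eq_fintype_card,
    Fintype.card_subtype]

lemma abs_unifProb_le_one {α : Type*} [Fintype α] (p : α → Prop) : |unifProb p| ≤ 1 := by
  classical
  rw [unifProb, abs_of_nonneg (by positivity), Nat.card_eq_fintype_card]
  exact div_le_one_of_le₀ (mod_cast Fintype.card_subtype_le p) (by positivity)

lemma unifProb_comp_perm {α : Type*} [Fintype α] (p : α → Prop) (e : Equiv.Perm α) :
    unifProb (fun x => p (e x)) = unifProb p := by
  rw [unifProb, unifProb, Nat.card_congr (e.subtypeEquiv fun _ => Iff.rfl)]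

lemma expect_unifProb_comm {α β : Type*} [Fintype α] [Fintype β] (p : α → β → Prop) :
    𝔼 x, unifProb (p x) = 𝔼 y, unifProb fun x => p x y := by
  classical
  simp only [unifProb_eq_expect]
  exact Finset.expect_comm _ _ _

lemma unifProb_fixedPointCount_rttPerm (n r ℓ : ℕ) :
    unifProb (fun s : Fin r → Fin n => fixedPointCount (rttPerm n r s) = ℓ) =
      𝔼 s : Fin r → Fin n, unifProb fun σ : Equiv.Perm (Fin n) =>
        fixedFirst n (distinctCount n r s) σ + topGap n (distinctCount n r s) σ = ℓ := by
  -- Relabelling the selected cards by a uniform `σ` preserves their law and acts on the top cards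
  -- of the shuffled deck, which are thus distributed as those of a uniform permutation.
  calc unifProb (fun s : Fin r → Fin n => fixedPointCount (rttPerm n r s) = ℓ)
      = 𝔼 σ : Equiv.Perm (Fin n), unifProb fun s : Fin r → Fin n =>
          fixedPointCount (rttPerm n r (σ ∘ s)) = ℓ := by
        have hlaw (σ : Equiv.Perm (Fin n)) :
            unifProb (fun s : Fin r → Fin n => fixedPointCount (rttPerm n r (σ ∘ s)) = ℓ) =
              unifProb fun s : Fin r → Fin n => fixedPointCount (rttPerm n r s) = ℓ :=
          unifProb_comp_perm (fun s : Fin r → Fin n => fixedPointCount (rttPerm n r s) = ℓ)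
            ((Equiv.refl (Fin r)).arrowCongr σ)
        simp only [hlaw, Fintype.expect_const]
    _ = 𝔼 s : Fin r → Fin n, unifProb fun σ : Equiv.Perm (Fin n) =>
          fixedFirst n (distinctCount n r s) (σ * rttPerm n r s) +
            topGap n (distinctCount n r s) (σ * rttPerm n r s) = ℓ := by
        rw [expect_unifProb_comm]
        simp only [fixedPointCount_rttPerm_perm_comp]
    _ = _ := Finset.expect_congr rfl fun s _ =>
        unifProb_comp_perm
          (fun σ => fixedFirst n (distinctCount n r s) σ + topGap n (distinctCount n r s) σ = ℓ)
          (Equiv.mulRight (rttPerm n r s))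

/-- The filter in `hf` consists of the pairs `(i, ω)` with `i` far along `l` and `X i ω` near `p`,
so no rate is needed to combine the concentration `hX` with a limit under `X i ω → p`. -/
lemma tendsto_expect_of_tendsto_expect_sq {ι : Type*} {l : Filter ι} {Ω : ι → Type*}
    [∀ i, Fintype (Ω i)] {X f : ∀ i, Ω i → ℝ} {p a C : ℝ} (hΩ : ∀ᶠ i in l, Nonempty (Ω i))
    (hX : Tendsto (fun i => 𝔼 ω, (X i ω - p) ^ 2) l (𝓝 0)) (hC : ∀ i ω, |f i ω| ≤ C)
    (hf : Tendsto (fun q : Σ i, Ω i => f q.1 q.2)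
      (comap Sigma.fst l ⊓ comap (fun q => X q.1 q.2) (𝓝 p)) (𝓝 a)) :
    Tendsto (fun i => 𝔼 ω, f i ω) l (𝓝 a) := by
  refine Metric.tendsto_nhds.2 fun ε hε => ?_
  obtain ⟨⟨t, δ⟩, ⟨ht, hδ⟩, hclose⟩ := ((l.basis_sets.comap Sigma.fst).inf
    (Metric.nhds_basis_ball.comap fun q : Σ i, Ω i => X q.1 q.2)).mem_iff.1
      (hf (Metric.ball_mem_nhds a (half_pos hε)))
  let D := (C + |a|) / δ ^ 2
  have hD : ∀ᶠ i in l, D * 𝔼 ω, (X i ω - p) ^ 2 < ε / 2 := by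
    have := hX.const_mul D
    rw [mul_zero] at this
    exact this.eventually_lt_const (half_pos hε)
  filter_upwards [ht, hΩ, hD] with i hi _ hDi
  have hpoint (ω : Ω i) : |f i ω - a| ≤ ε / 2 + D * (X i ω - p) ^ 2 := by
    have hC₀ : 0 ≤ C + |a| := add_nonneg ((abs_nonneg _).trans (hC i ω)) (abs_nonneg a)
    rcases lt_or_ge |X i ω - p| δ with h | h
    · have hfa : |f i ω - a| < ε / 2 := @hclose ⟨i, ω⟩ ⟨hi, h⟩
      have : 0 ≤ D * (X i ω - p) ^ 2 := by positivity
      linarith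
    · have hfar : δ ^ 2 ≤ (X i ω - p) ^ 2 := sq_le_sq.2 (by rwa [abs_of_pos hδ])
      have hDfar : C + |a| ≤ D * (X i ω - p) ^ 2 := by
        rw [div_mul_eq_mul_div, le_div_iff₀ (by positivity)]
        gcongr
      linarith [abs_sub (f i ω) a, hC i ω]
  calc |𝔼 ω, f i ω - a| = |𝔼 ω, (f i ω - a)| := by
        rw [Finset.expect_sub_distrib, Fintype.expect_const]
    _ ≤ 𝔼 ω, |f i ω - a| := Finset.abs_expect_le _ _
    _ ≤ 𝔼 ω, (ε / 2 + D * (X i ω - p) ^ 2) := Finset.expect_le_expect fun ω _ => hpoint ω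
    _ = ε / 2 + D * 𝔼 ω, (X i ω - p) ^ 2 := by
        rw [Finset.expect_add_distrib, Fintype.expect_const, Finset.mul_expect]
    _ < ε := by linarith

end Averages

/-! ### Joint factorial moments for a uniform permutation -/

section PermCounts

variable {α : Type*} [Fintype α] [DecidableEq α]

lemma card_filter_perm_forall_eq_self (A : Finset α) :
    #{σ : Equiv.Perm α | ∀ a ∈ A, σ a = a} = (Fintype.card α - #A).factorial := by
  have h := Fintype.card_congr (Equiv.Perm.subtypeEquivSubtypePerm fun a : α => a ∉ A)
  rw [Fintype.card_perm, Fintype.card_subtype_compl, Fintype.card_coe] at h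
  rw [h, Fintype.card_subtype]
  simp

lemma card_filter_perm_forall_eq {A : Finset α} {f : α → α} (hf : Set.InjOn f A) :
    #{σ : Equiv.Perm α | ∀ a ∈ A, σ a = f a} = (Fintype.card α - #A).factorial := by
  obtain ⟨g, hg⟩ := Finset.exists_equiv_extend_of_card_eq (β := α) (t := Finset.univ) (by simp)
    (Finset.subset_univ _) hf
  let τ : Equiv.Perm α := g.trans (Equiv.subtypeUnivEquiv (by simp))
  have hτ (a : α) (ha : a ∈ A) : τ a = f a := hg a ha
  rw [← card_filter_perm_forall_eq_self]
  refine Finset.card_equiv (Equiv.mulLeft τ⁻¹) fun σ => ?_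
  simp only [Finset.mem_filter_univ, Equiv.coe_mulLeft, Equiv.Perm.mul_apply]
  exact forall₂_congr fun a ha => by rw [Equiv.Perm.inv_eq_iff_eq, hτ a ha]

lemma filter_perm_forall_eq_and_forall_mem_insert {A T U : Finset α} {f : α → α} {a u : α}
    (haA : a ∉ A) (haT : a ∉ T) (hu : u ∈ U) :
    (Finset.univ.filter fun σ : Equiv.Perm α =>
        ((∀ b ∈ A, σ b = f b) ∧ ∀ b ∈ insert a T, σ b ∈ U) ∧ σ a = u) =
      Finset.univ.filter fun σ : Equiv.Perm α =>
        (∀ b ∈ insert a A, σ b = Function.update f a u b) ∧ ∀ b ∈ T, σ b ∈ U.erase u := by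
  have hupdate (b : α) (hb : b ∈ A) : Function.update f a u b = f b :=
    Function.update_of_ne (ne_of_mem_of_not_mem hb haA) _ _
  ext σ
  simp only [Finset.mem_filter_univ, Finset.forall_mem_insert, Function.update_self]
  constructor
  · rintro ⟨⟨hA, -, hT⟩, rfl⟩
    exact ⟨⟨rfl, fun b hb => by rw [hupdate b hb, hA b hb]⟩, fun b hb =>
      Finset.mem_erase.2 ⟨σ.injective.ne (ne_of_mem_of_not_mem hb haT), hT b hb⟩⟩
  · rintro ⟨⟨rfl, hA⟩, hT⟩
    exact ⟨⟨fun b hb => by rw [hA b hb, hupdate b hb], hu,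
      fun b hb => Finset.mem_of_mem_erase (hT b hb)⟩, rfl⟩

lemma card_filter_perm_forall_eq_and_forall_mem {A T U : Finset α} {f : α → α}
    (hf : Set.InjOn f A) (hAT : Disjoint A T) (hU : ∀ a ∈ A, f a ∉ U) :
    #{σ : Equiv.Perm α | (∀ a ∈ A, σ a = f a) ∧ ∀ a ∈ T, σ a ∈ U} =
      (#U).descFactorial #T * (Fintype.card α - (#A + #T)).factorial := by
  induction T using Finset.induction_on generalizing A U f with
  | empty => simp [card_filter_perm_forall_eq hf]
  | insert a T ha ih =>
    obtain ⟨haA, hAT⟩ := Finset.disjoint_insert_right.1 hAT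
    have hfiber (u : α) (hu : u ∈ U) :
        #{σ : Equiv.Perm α | ((∀ b ∈ A, σ b = f b) ∧ ∀ b ∈ insert a T, σ b ∈ U) ∧ σ a = u} =
          (#U - 1).descFactorial #T * (Fintype.card α - (#A + 1 + #T)).factorial := by
      have hupdate : Set.EqOn (Function.update f a u) f A := fun b hb =>
        Function.update_of_ne (ne_of_mem_of_not_mem hb haA) _ _
      rw [filter_perm_forall_eq_and_forall_mem_insert haA ha hu, ih,
        Finset.card_erase_of_mem hu, Finset.card_insert_of_notMem haA]
      · rw [Finset.coe_insert, Set.injOn_insert (mod_cast haA), hupdate.image_eq,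
          Function.update_self]
        exact ⟨hf.congr hupdate.symm, fun ⟨b, hb, hbu⟩ => hU b hb (hbu ▸ hu)⟩
      · exact Finset.disjoint_insert_left.2 ⟨ha, hAT⟩
      · simp only [Finset.forall_mem_insert, Function.update_self]
        refine ⟨Finset.notMem_erase u U, fun b hb h => hU b hb ?_⟩
        exact hupdate hb ▸ Finset.mem_of_mem_erase h
    have hmaps : Set.MapsTo (fun σ : Equiv.Perm α => σ a)
        ({σ | (∀ b ∈ A, σ b = f b) ∧ ∀ b ∈ insert a T, σ b ∈ U} : Finset (Equiv.Perm α)) U :=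
      fun σ hσ => ((Finset.mem_filter_univ _).1 hσ).2 a (Finset.mem_insert_self a T)
    have hdesc : #U * (#U - 1).descFactorial #T = (#U).descFactorial (#T + 1) := by
      rcases (#U).eq_zero_or_pos with h | h
      · simp [h]
      · obtain ⟨m, hm⟩ := Nat.exists_eq_add_of_lt h
        rw [hm, zero_add, Nat.succ_descFactorial_succ, Nat.add_sub_cancel]
    rw [Finset.card_eq_sum_card_fiberwise hmaps]
    simp only [Finset.filter_filter]
    rw [Finset.sum_congr rfl hfiber, Finset.sum_const, smul_eq_mul,
      Finset.card_insert_of_notMem ha, ← mul_assoc, hdesc, add_right_comm, add_assoc]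

end PermCounts

section FactorialMoments

lemma choose_card_filter_eq_sum {α : Type*} (s : Finset α) (P : α → Prop) [DecidablePred P]
    (j : ℕ) :
    (#(s.filter P)).choose j = ∑ S ∈ s.powersetCard j, if ∀ a ∈ S, P a then 1 else 0 := by
  rw [← Finset.card_filter, ← Finset.card_powersetCard]
  congr 1 with S
  simp only [Finset.mem_powersetCard, Finset.mem_filter, Finset.subset_iff]
  grind

variable {n k t : ℕ}

lemma card_filter_eq_self_and_le_topGap (ht : t ≤ n) {S : Finset (Fin n)}
    (hS : ∀ a ∈ S, (a : ℕ) < k) :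
    #{σ : Equiv.Perm (Fin n) | (∀ a ∈ S, σ a = a) ∧ t ≤ topGap n k σ} =
      (n - k).descFactorial t * (n - (#S + t)).factorial := by
  let T : Finset (Fin n) := {v | ¬ (v : ℕ) < n - t}
  let U : Finset (Fin n) := {i | ¬ (i : ℕ) < k}
  have hT : #T = t := (card_filter_not_val_lt _).trans (Nat.sub_sub_self ht)
  have hU : #U = n - k := card_filter_not_val_lt k
  have hgap (σ : Equiv.Perm (Fin n)) : t ≤ topGap n k σ ↔ ∀ v ∈ T, σ⁻¹ v ∈ U := by
    simp only [le_topGap_iff ht, T, U, Finset.mem_filter_univ]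
    refine ⟨fun h v => mt fun hv => by simpa using h _ hv, fun h i hi => ?_⟩
    exact not_not.1 fun hv => h (σ i) hv (by simpa using hi)
  have hinv : #{σ : Equiv.Perm (Fin n) | (∀ a ∈ S, σ a = a) ∧ t ≤ topGap n k σ} =
      #{σ : Equiv.Perm (Fin n) | (∀ a ∈ S, σ a = id a) ∧ ∀ v ∈ T, σ v ∈ U} := by
    refine Finset.card_equiv (Equiv.inv _) fun σ => ?_
    simp only [Finset.mem_filter_univ, hgap, Equiv.inv_apply, id]
    exact and_congr_left' (forall₂_congr fun a _ => by rw [Equiv.Perm.inv_eq_iff_eq, eq_comm])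
  rw [hinv]
  by_cases htk : t ≤ n - k
  · have hST : Disjoint S T := Finset.disjoint_left.2 fun a ha haT =>
      (Finset.mem_filter_univ a).1 haT (by have := hS a ha; omega)
    have hSU (a : Fin n) (ha : a ∈ S) : id a ∉ U := fun haU =>
      (Finset.mem_filter_univ a).1 haU (hS a ha)
    have hcount := card_filter_perm_forall_eq_and_forall_mem (Set.injOn_id _) hST hSU
    rw [hT, hU, Fintype.card_fin] at hcount
    convert hcount
  · rw [Nat.descFactorial_of_lt (not_le.1 htk), zero_mul, Finset.card_eq_zero,
      Finset.filter_eq_empty_iff]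
    rintro σ - ⟨-, h⟩
    have := Finset.card_le_card_of_injOn σ h σ.injective.injOn
    omega

lemma sum_choose_fixedFirst (hk : k ≤ n) (ht : t ≤ n) (j : ℕ) :
    ∑ σ : Equiv.Perm (Fin n), (if t ≤ topGap n k σ then (fixedFirst n k σ).choose j else 0) =
      k.choose j * ((n - k).descFactorial t * (n - (j + t)).factorial) := by
  have hchoose (σ : Equiv.Perm (Fin n)) :
      (if t ≤ topGap n k σ then (fixedFirst n k σ).choose j else 0) =
        ∑ S ∈ ({i | (i : ℕ) < k} : Finset (Fin n)).powersetCard j,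
          if (∀ a ∈ S, σ a = a) ∧ t ≤ topGap n k σ then 1 else 0 := by
    rw [fixedFirst, ← Finset.filter_filter, choose_card_filter_eq_sum]
    split_ifs with h
    · exact Finset.sum_congr rfl fun S _ => by congr 1; simp only [h, and_true]
    · simp [h]
  simp only [hchoose]
  rw [Finset.sum_comm]
  have hS (S : Finset (Fin n))
      (hS : S ∈ ({i | (i : ℕ) < k} : Finset (Fin n)).powersetCard j) :
      ∑ σ : Equiv.Perm (Fin n), (if (∀ a ∈ S, σ a = a) ∧ t ≤ topGap n k σ then 1 else 0) =
        (n - k).descFactorial t * (n - (j + t)).factorial := by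
    obtain ⟨hSk, rfl⟩ := Finset.mem_powersetCard.1 hS
    rw [← Finset.card_filter, card_filter_eq_self_and_le_topGap ht]
    exact fun a ha => (Finset.mem_filter_univ a).1 (hSk ha)
  rw [Finset.sum_congr rfl hS, Finset.sum_const, Finset.card_powersetCard,
    Fin.card_filter_val_lt, min_eq_right hk, smul_eq_mul]

lemma expect_choose_fixedFirst (hk : k ≤ n) (ht : t ≤ n) (j : ℕ) :
    𝔼 σ : Equiv.Perm (Fin n),
        (if t ≤ topGap n k σ then 1 else 0) * ((fixedFirst n k σ).choose j : ℝ) =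
      k.descFactorial j * (n - k).descFactorial t / n.descFactorial (j + t) / j.factorial := by
  have hsum : ∑ σ : Equiv.Perm (Fin n),
      (if t ≤ topGap n k σ then 1 else 0) * ((fixedFirst n k σ).choose j : ℝ) =
        k.choose j * ((n - k).descFactorial t * (n - (j + t)).factorial) := by
    simp only [ite_mul, one_mul, zero_mul]
    exact_mod_cast sum_choose_fixedFirst hk ht j
  rw [Fintype.expect_eq_sum_div_card, hsum, Fintype.card_perm, Fintype.card_fin,
    Nat.descFactorial_eq_factorial_mul_choose k, Nat.cast_mul]
  have hj₀ : (j.factorial : ℝ) ≠ 0 := mod_cast j.factorial_ne_zero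
  by_cases hj : j + t ≤ n
  · have hdesc₀ : (n.descFactorial (j + t) : ℝ) ≠ 0 :=
      mod_cast (Nat.descFactorial_pos.2 hj).ne'
    have hfact₀ : ((n - (j + t)).factorial : ℝ) ≠ 0 := mod_cast Nat.factorial_ne_zero _
    rw [← Nat.factorial_mul_descFactorial hj, Nat.cast_mul]
    field_simp
  · rcases lt_or_ge k j with h | h
    · simp [Nat.choose_eq_zero_of_lt h]
    · simp [Nat.descFactorial_of_lt (show n - k < t by omega)]

lemma expect_choose_fixedFirst_le (hk : k ≤ n) (ht : t ≤ n) (j : ℕ) :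
    𝔼 σ : Equiv.Perm (Fin n),
        (if t ≤ topGap n k σ then 1 else 0) * ((fixedFirst n k σ).choose j : ℝ) ≤
      1 / j.factorial := by
  have hdesc : k.descFactorial j * (n - k).descFactorial t ≤ n.descFactorial (j + t) := by
    rcases lt_or_ge k j with h | h
    · simp [Nat.descFactorial_of_lt h]
    · rw [← Nat.descFactorial_mul_descFactorial (Nat.le_add_right j t), Nat.add_sub_cancel_left,
        mul_comm]
      exact Nat.mul_le_mul (Nat.descFactorial_le _ (by omega)) (Nat.descFactorial_le _ hk)
  rw [expect_choose_fixedFirst hk ht]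
  gcongr
  exact div_le_one_of_le₀ (mod_cast hdesc) (by positivity)

lemma tendsto_descFactorial_div_pow {ι : Type*} {l : Filter ι} {k n : ι → ℕ} {p : ℝ}
    (hn : Tendsto n l atTop) (h : Tendsto (fun i => (k i : ℝ) / n i) l (𝓝 p)) (j : ℕ) :
    Tendsto (fun i => ((k i).descFactorial j : ℝ) / (n i : ℝ) ^ j) l (𝓝 (p ^ j)) := by
  have hfactor (m : ℕ) : Tendsto (fun i => ((k i - m : ℕ) : ℝ) / n i) l (𝓝 p) := by
    have hm : Tendsto (fun i => (m : ℝ) / n i) l (𝓝 0) :=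
      (tendsto_natCast_atTop_atTop.comp hn).const_div_atTop _
    refine tendsto_of_tendsto_of_tendsto_of_le_of_le (by simpa using h.sub hm) h
      (fun i => ?_) fun i => ?_
    · rw [← sub_div]
      gcongr
      rw [sub_le_iff_le_add, ← Nat.cast_add]
      exact Nat.cast_le.2 le_tsub_add
    · gcongr
      exact Nat.sub_le _ _
  have hprod := tendsto_finsetProd (Finset.range j) fun m _ => hfactor m
  rw [Finset.prod_const, Finset.card_range] at hprod
  refine hprod.congr fun i => ?_
  rw [Finset.prod_div_distrib, Finset.prod_const, Finset.card_range,
    Nat.descFactorial_eq_prod_range, Nat.cast_prod]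

lemma tendsto_expect_choose_fixedFirst {ι : Type*} {l : Filter ι} {k n : ι → ℕ} {p : ℝ}
    (hn : Tendsto n l atTop) (hk : ∀ᶠ i in l, k i ≤ n i)
    (h : Tendsto (fun i => (k i : ℝ) / n i) l (𝓝 p)) (t j : ℕ) :
    Tendsto (fun i => 𝔼 σ : Equiv.Perm (Fin (n i)),
        (if t ≤ topGap (n i) (k i) σ then 1 else 0) * ((fixedFirst (n i) (k i) σ).choose j : ℝ))
      l (𝓝 ((1 - p) ^ t * p ^ j / j.factorial)) := by
  have hn₀ : ∀ᶠ i in l, (n i : ℝ) ≠ 0 :=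
    (hn.eventually_gt_atTop 0).mono fun i hi => mod_cast hi.ne'
  have hcompl : Tendsto (fun i => ((n i - k i : ℕ) : ℝ) / n i) l (𝓝 (1 - p)) := by
    refine (h.const_sub 1).congr' ?_
    filter_upwards [hk, hn₀] with i hi hi₀
    rw [Nat.cast_sub hi, sub_div, div_self hi₀]
  have hself : Tendsto (fun i => (n i : ℝ) / n i) l (𝓝 1) :=
    tendsto_const_nhds.congr' (hn₀.mono fun i hi => (div_self hi).symm)
  have hlim := ((tendsto_descFactorial_div_pow hn h j).mul
    (tendsto_descFactorial_div_pow hn hcompl t)).div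
      (tendsto_descFactorial_div_pow hn hself (j + t)) (by simp)
  rw [one_pow, div_one, mul_comm (p ^ j)] at hlim
  refine (hlim.div_const _).congr' ?_
  filter_upwards [hk, hn.eventually_ge_atTop t, hn₀] with i hi hit hi₀
  rw [expect_choose_fixedFirst hi hit, Pi.div_apply, div_mul_div_comm, ← pow_add,
    div_div_div_cancel_right₀ (pow_ne_zero _ hi₀)]

end FactorialMoments

/-! ### The method of factorial moments -/

section MethodOfMoments

lemma hasSum_neg_one_pow_mul_choose_mul_choose (m x : ℕ) :
    HasSum (fun i : ℕ => (-1 : ℝ) ^ i * (x + i).choose x * m.choose (x + i))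
      (if m = x then 1 else 0) := by
  have hfactor (i : ℕ) : (-1 : ℝ) ^ i * (x + i).choose x * m.choose (x + i) =
      m.choose x * ((-1) ^ i * (m - x).choose i) := by
    have h := Nat.choose_mul (n := m) (Nat.le_add_right x i)
    rw [Nat.add_sub_cancel_left] at h
    have h' : (m.choose (x + i) : ℝ) * (x + i).choose x = m.choose x * (m - x).choose i :=
      mod_cast h
    linear_combination (-1 : ℝ) ^ i * h'
  have hsum : ∑ i ∈ Finset.range (m - x + 1), (-1 : ℝ) ^ i * (m - x).choose i =
      if m - x = 0 then 1 else 0 := mod_cast Int.alternating_sum_range_choose (n := m - x)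
  have hvalue : (if m = x then 1 else 0 : ℝ) = m.choose x * if m - x = 0 then 1 else 0 := by
    rcases lt_trichotomy m x with h | rfl | h
    · simp [h.ne, Nat.choose_eq_zero_of_lt h]
    · simp
    · simp [h.ne', Nat.sub_ne_zero_of_lt h]
  simp only [hfactor]
  rw [hvalue, ← hsum]
  refine (hasSum_sum_of_ne_finset_zero fun i hi => ?_).mul_left _
  rw [Finset.mem_range, not_lt] at hi
  rw [Nat.choose_eq_zero_of_lt hi, Nat.cast_zero, mul_zero]

lemma hasSum_expect_mul_choose {Ω : Type*} [Fintype Ω] (w : Ω → ℝ) (X : Ω → ℕ) (x : ℕ) :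
    HasSum (fun i : ℕ => (-1 : ℝ) ^ i * (x + i).choose x * 𝔼 ω, w ω * (X ω).choose (x + i))
      (𝔼 ω, w ω * if X ω = x then 1 else 0) := by
  simp only [Fintype.expect_eq_sum_div_card, mul_div_assoc']
  refine HasSum.div_const ?_ _
  simp only [Finset.mul_sum]
  refine hasSum_sum fun ω _ => ?_
  simp only [mul_left_comm _ (w ω)]
  exact (hasSum_neg_one_pow_mul_choose_mul_choose (X ω) x).mul_left (w ω)

lemma cast_choose_mul_pow_div_factorial (p : ℝ) (x i : ℕ) :
    ((x + i).choose x : ℝ) * (p ^ (x + i) / (x + i).factorial) =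
      p ^ x / x.factorial * (p ^ i / i.factorial) := by
  rw [Nat.cast_add_choose]
  have := (x + i).factorial_ne_zero
  field_simp
  ring

lemma tendsto_expect_mul_ite_eq {ι : Type*} {l : Filter ι} {Ω : ι → Type*} [∀ i, Fintype (Ω i)]
    {w : ∀ i, Ω i → ℝ} {X : ∀ i, Ω i → ℕ} {a p B : ℝ}
    (hB : ∀ᶠ i in l, ∀ j, |𝔼 ω, w i ω * (X i ω).choose j| ≤ B ^ j / j.factorial)
    (h : ∀ j, Tendsto (fun i => 𝔼 ω, w i ω * (X i ω).choose j) l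
      (𝓝 (a * (p ^ j / j.factorial)))) (x : ℕ) :
    Tendsto (fun i => 𝔼 ω, w i ω * if X i ω = x then 1 else 0) l
      (𝓝 (a * (Real.exp (-p) * p ^ x / x.factorial))) := by
  have hlimit : HasSum (fun i : ℕ => (-1 : ℝ) ^ i * (x + i).choose x *
      (a * (p ^ (x + i) / (x + i).factorial))) (a * (Real.exp (-p) * p ^ x / x.factorial)) := by
    have hexp : HasSum (fun i : ℕ => (-p) ^ i / i.factorial) (Real.exp (-p)) := by
      rw [Real.exp_eq_exp_ℝ]
      exact NormedSpace.expSeries_div_hasSum_exp (-p)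
    have hterm (i : ℕ) : (-1 : ℝ) ^ i * (x + i).choose x * (a * (p ^ (x + i) / (x + i).factorial)) =
        a * (p ^ x / x.factorial) * ((-p) ^ i / i.factorial) := by
      rw [neg_pow]
      linear_combination (-1) ^ i * a * cast_choose_mul_pow_div_factorial p x i
    have hvalue : a * (Real.exp (-p) * p ^ x / x.factorial) =
        a * (p ^ x / x.factorial) * Real.exp (-p) := by ring
    simp only [hterm, hvalue]
    exact hexp.mul_left _
  rw [← hlimit.tsum_eq]
  simp only [← (hasSum_expect_mul_choose _ _ x).tsum_eq]
  refine tendsto_tsum_of_dominated_convergence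
    (bound := fun i => B ^ x / x.factorial * (B ^ i / i.factorial))
    ((Real.summable_pow_div_factorial B).mul_left _)
    (fun i => (h (x + i)).const_mul _) (hB.mono fun i hi j => ?_)
  rw [norm_mul, norm_mul, norm_pow, norm_neg, norm_one, one_pow, one_mul, Real.norm_natCast,
    ← cast_choose_mul_pow_div_factorial]
  gcongr
  exact hi (x + j)

end MethodOfMoments

/-! ### Fixed points after the top cards are randomised -/

section Limit

/-- The probability that `X + Y = ℓ` for independent `X ~ Poisson(p)` and `Y` geometric with
`P(Y = t) = p (1 - p) ^ t`, the limit law of the number of fixed points. -/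
noncomputable def poissonAddGeometricMass (p : ℝ) (ℓ : ℕ) : ℝ :=
  ∑ t ∈ Finset.range (ℓ + 1),
    p * (1 - p) ^ t * (Real.exp (-p) * p ^ (ℓ - t) / (ℓ - t).factorial)

lemma unifProb_add_eq {Ω : Type*} [Fintype Ω] (X Y : Ω → ℕ) (ℓ : ℕ) :
    unifProb (fun ω => X ω + Y ω = ℓ) = ∑ t ∈ Finset.range (ℓ + 1),
      (𝔼 ω, (if t ≤ Y ω then 1 else 0) * (if X ω = ℓ - t then (1 : ℝ) else 0) -
        𝔼 ω, (if t + 1 ≤ Y ω then 1 else 0) * (if X ω = ℓ - t then (1 : ℝ) else 0)) := by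
  simp only [← Finset.expect_sub_distrib, ← Finset.expect_sum_comm, ← sub_mul,
    unifProb_eq_expect]
  refine Finset.expect_congr rfl fun ω _ => ?_
  have hterm (t : ℕ) :
      ((if t ≤ Y ω then 1 else 0) - (if t + 1 ≤ Y ω then 1 else 0) : ℝ) *
        (if X ω = ℓ - t then 1 else 0) =
      if Y ω = t then if X ω = ℓ - Y ω then 1 else 0 else 0 := by
    rcases lt_trichotomy (Y ω) t with h | h | h
    · simp [h.not_ge, h.ne, (h.trans (Nat.lt_succ_self t)).not_ge]
    · simp [h]
    · simp [h.le, h.ne', Nat.succ_le_of_lt h]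
  simp only [hterm]
  rw [Finset.sum_ite_eq, ← ite_and]
  exact if_congr (by rw [Finset.mem_range]; omega) rfl rfl

lemma tendsto_unifProb_fixedFirst_add_topGap {ι : Type*} {l : Filter ι} {k n : ι → ℕ} {p : ℝ}
    (hn : Tendsto n l atTop) (hk : ∀ᶠ i in l, k i ≤ n i)
    (h : Tendsto (fun i => (k i : ℝ) / n i) l (𝓝 p)) (ℓ : ℕ) :
    Tendsto (fun i => unifProb fun σ : Equiv.Perm (Fin (n i)) =>
      fixedFirst (n i) (k i) σ + topGap (n i) (k i) σ = ℓ) l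
      (𝓝 (poissonAddGeometricMass p ℓ)) := by
  have hjoint (t x : ℕ) : Tendsto (fun i => 𝔼 σ : Equiv.Perm (Fin (n i)),
      (if t ≤ topGap (n i) (k i) σ then 1 else 0) *
        (if fixedFirst (n i) (k i) σ = x then (1 : ℝ) else 0)) l
      (𝓝 ((1 - p) ^ t * (Real.exp (-p) * p ^ x / x.factorial))) := by
    refine tendsto_expect_mul_ite_eq (B := 1) ?_
      (fun j => by simpa only [mul_div_assoc] using tendsto_expect_choose_fixedFirst hn hk h t j) x
    filter_upwards [hk, hn.eventually_ge_atTop t] with i hi hit j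
    rw [one_pow, abs_of_nonneg (Finset.expect_nonneg fun σ _ => by positivity)]
    exact expect_choose_fixedFirst_le hi hit j
  simp only [unifProb_add_eq, poissonAddGeometricMass]
  refine tendsto_finsetSum _ fun t _ => ?_
  convert (hjoint t (ℓ - t)).sub (hjoint (t + 1) (ℓ - t)) using 2
  ring

end Limit

/-! ### The number of distinct selected cards -/

section Occupancy

section Functions

variable {α β : Type*} [Fintype α] [DecidableEq α] [Fintype β] [DecidableEq β]

lemma card_filter_fun_forall_notMem_image (S : Finset β) :
    #{s : α → β | ∀ b ∈ S, b ∉ Finset.univ.image s} =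
      (Fintype.card β - #S) ^ Fintype.card α := by
  have hpi : ({s : α → β | ∀ b ∈ S, b ∉ Finset.univ.image s} : Finset (α → β)) =
      Fintype.piFinset fun _ : α => Sᶜ := by
    ext s
    simp only [Finset.mem_filter_univ, Finset.mem_image, Finset.mem_univ, true_and,
      Fintype.mem_piFinset, Finset.mem_compl]
    exact ⟨fun h i hi => h _ hi ⟨i, rfl⟩, fun h b hb ⟨i, hi⟩ => h i (hi ▸ hb)⟩
  rw [hpi, Fintype.card_piFinset, Finset.prod_const, Finset.card_compl, Finset.card_univ]

lemma sum_choose_card_compl_image (j : ℕ) :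
    ∑ s : α → β, (#(Finset.univ.image s)ᶜ).choose j =
      (Fintype.card β).choose j * (Fintype.card β - j) ^ Fintype.card α := by
  have hcompl (s : α → β) :
      (Finset.univ.image s)ᶜ = Finset.univ.filter (· ∉ Finset.univ.image s) := by
    ext
    simp
  have hmiss : ∀ S ∈ (Finset.univ : Finset β).powersetCard j,
      ∑ s : α → β, (if ∀ b ∈ S, b ∉ Finset.univ.image s then 1 else 0) =
        (Fintype.card β - j) ^ Fintype.card α := by
    intro S hS
    rw [← Finset.card_filter, card_filter_fun_forall_notMem_image, (Finset.mem_powersetCard.1 hS).2]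
  simp only [hcompl, choose_card_filter_eq_sum]
  rw [Finset.sum_comm]
  calc _ = ∑ _ ∈ (Finset.univ : Finset β).powersetCard j, (Fintype.card β - j) ^ Fintype.card α :=
        Finset.sum_congr rfl fun S hS => by convert hmiss S hS
    _ = _ := by simp

end Functions

variable {n : ℕ}

lemma expect_choose_sub_distinctCount (hn : n ≠ 0) (r : ℕ) {j : ℕ} (hj : j ≤ n) :
    𝔼 s : Fin r → Fin n, ((n - distinctCount n r s).choose j : ℝ) =
      n.choose j * (1 - j / n) ^ r := by
  have hn₀ : (n : ℝ) ≠ 0 := mod_cast hn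
  have hsum := sum_choose_card_compl_image (α := Fin r) (β := Fin n) j
  simp only [Finset.card_compl, Fintype.card_fin, ← distinctCount.eq_def] at hsum
  rw [Fintype.expect_eq_sum_div_card, ← Nat.cast_sum, hsum]
  simp only [Fintype.card_fun, Fintype.card_fin, Nat.cast_mul, Nat.cast_pow, Nat.cast_sub hj]
  rw [mul_div_assoc, ← div_pow, sub_div, div_self hn₀]

lemma expect_sq_distinctCount_div_sub (hn : 2 ≤ n) (r : ℕ) (q : ℝ) :
    𝔼 s : Fin r → Fin n, ((distinctCount n r s : ℝ) / n - (1 - q)) ^ 2 =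
      (1 - 1 / n) * (1 - 2 / n) ^ r + (1 / n - 2 * q) * (1 - 1 / n) ^ r + q ^ 2 := by
  have : NeZero n := ⟨by omega⟩
  have hn₀ : (n : ℝ) ≠ 0 := mod_cast this.ne
  -- Expand `((n - K) / n - q) ^ 2` in the binomial coefficients of `n - K`.
  have hexpand (s : Fin r → Fin n) : ((distinctCount n r s : ℝ) / n - (1 - q)) ^ 2 =
      2 / n ^ 2 * (n - distinctCount n r s).choose 2 +
        (1 / n ^ 2 - 2 * q / n) * (n - distinctCount n r s).choose 1 + q ^ 2 := by
    rw [Nat.cast_choose_two, Nat.choose_one_right, Nat.cast_sub (distinctCount_le s)]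
    field_simp
    ring
  have h₁ := expect_choose_sub_distinctCount (by omega) r (by omega : 1 ≤ n)
  have h₂ := expect_choose_sub_distinctCount (by omega) r hn
  rw [Nat.choose_one_right, Nat.cast_one] at h₁
  rw [Nat.cast_choose_two, Nat.cast_ofNat] at h₂
  simp only [hexpand, Finset.expect_add_distrib, ← Finset.mul_expect, Fintype.expect_const, h₁, h₂]
  field_simp

lemma tendsto_one_add_div_pow_exp_mul {r : ℕ → ℕ} {c : ℝ}
    (hr : Tendsto (fun n => (r n : ℝ) / n) atTop (𝓝 c)) (x : ℝ) :
    Tendsto (fun n : ℕ => (1 + x / n) ^ r n) atTop (𝓝 (Real.exp (c * x))) := by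
  have hpow := (Real.tendsto_one_add_div_pow_exp x).rpow hr (.inl (Real.exp_ne_zero x))
  rw [← Real.exp_mul, mul_comm x] at hpow
  have hpos : ∀ᶠ n : ℕ in atTop, 0 < 1 + x / n := by
    have hbase : Tendsto (fun n : ℕ => 1 + x / n) atTop (𝓝 (1 + 0)) :=
      (tendsto_natCast_atTop_atTop.const_div_atTop x).const_add 1
    exact hbase.eventually_const_lt (by norm_num)
  refine hpow.congr' ?_
  filter_upwards [hpos, eventually_ne_atTop 0] with n hn hn₀
  have hn₀ : (n : ℝ) ≠ 0 := mod_cast hn₀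
  rw [← Real.rpow_natCast, ← Real.rpow_mul hn.le, mul_div_cancel₀ _ hn₀, Real.rpow_natCast]

lemma tendsto_expect_sq_distinctCount_div_sub {r : ℕ → ℕ} {c : ℝ}
    (hr : Tendsto (fun n => (r n : ℝ) / n) atTop (𝓝 c)) :
    Tendsto (fun n => 𝔼 s : Fin (r n) → Fin n,
      ((distinctCount n (r n) s : ℝ) / n - (1 - Real.exp (-c))) ^ 2) atTop (𝓝 0) := by
  have hinv : Tendsto (fun n : ℕ => 1 / (n : ℝ)) atTop (𝓝 0) :=
    tendsto_natCast_atTop_atTop.const_div_atTop 1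
  have h₁ := tendsto_one_add_div_pow_exp_mul hr (-1)
  have h₂ := tendsto_one_add_div_pow_exp_mul hr (-2)
  have hlim := (((hinv.const_sub 1).mul h₂).add
    ((hinv.sub_const (2 * Real.exp (-c))).mul h₁)).add_const (Real.exp (-c) ^ 2)
  have hvalue : (1 - 0) * Real.exp (c * -2) + (0 - 2 * Real.exp (-c)) * Real.exp (c * -1) +
      Real.exp (-c) ^ 2 = 0 := by
    rw [show c * -2 = -c + -c by ring, Real.exp_add, mul_neg_one]
    ring
  rw [hvalue] at hlim
  refine hlim.congr' ?_
  filter_upwards [eventually_ge_atTop 2] with n hn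
  simp only [expect_sq_distinctCount_div_sub hn, neg_div, ← sub_eq_add_neg]

end Occupancy

lemma tendsto_unifProb_fixedPointCount_rttPerm {r : ℕ → ℕ} {c : ℝ}
    (hr : Tendsto (fun n => (r n : ℝ) / n) atTop (𝓝 c)) (ℓ : ℕ) :
    Tendsto (fun n => unifProb fun s : Fin (r n) → Fin n =>
        fixedPointCount (rttPerm n (r n) s) = ℓ)
      atTop (𝓝 (poissonAddGeometricMass (1 - Real.exp (-c)) ℓ)) := by
  have hdeck : ∀ᶠ n in atTop, Nonempty (Fin (r n) → Fin n) :=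
    (eventually_ne_atTop 0).mono fun n hn => ⟨fun _ => ⟨0, Nat.pos_of_ne_zero hn⟩⟩
  let L : Filter (Σ n, Fin (r n) → Fin n) := comap Sigma.fst atTop ⊓
    comap (fun q => (distinctCount q.1 (r q.1) q.2 : ℝ) / q.1) (𝓝 (1 - Real.exp (-c)))
  have hn : Tendsto Sigma.fst L atTop := tendsto_comap.mono_left inf_le_left
  have hK : Tendsto (fun q : Σ n, Fin (r n) → Fin n =>
      (distinctCount q.1 (r q.1) q.2 : ℝ) / q.1) L (𝓝 (1 - Real.exp (-c))) :=
    tendsto_comap.mono_left inf_le_right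
  have hle : ∀ᶠ q in L, distinctCount q.1 (r q.1) q.2 ≤ q.1 :=
    .of_forall fun q => distinctCount_le q.2
  have htop := tendsto_unifProb_fixedFirst_add_topGap hn hle hK ℓ
  have hmean := tendsto_expect_of_tendsto_expect_sq
    (X := fun n s => (distinctCount n (r n) s : ℝ) / n)
    (f := fun n s => unifProb fun σ : Equiv.Perm (Fin n) =>
      fixedFirst n (distinctCount n (r n) s) σ + topGap n (distinctCount n (r n) s) σ = ℓ)
    hdeck (tendsto_expect_sq_distinctCount_div_sub hr) (fun _ _ => abs_unifProb_le_one _) htop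
  exact hmean.congr fun n => (unifProb_fixedPointCount_rttPerm n (r n) ℓ).symm

theorem rtt_fixedPoints_critical_general {r : ℕ → ℕ} {c : ℝ}
    (hr : Tendsto (fun n => (r n : ℝ) / n) atTop (𝓝 c)) (ℓ : ℕ) :
    Tendsto (fun n => unifProb fun s : Fin (r n) → Fin n =>
        fixedPointCount (rttPerm n (r n) s) = ℓ)
      atTop (𝓝 (∑ j ∈ Finset.range (ℓ + 1),
        (1 - Real.exp (-c)) * Real.exp (-c * j) *
          (Real.exp (-(1 - Real.exp (-c))) * (1 - Real.exp (-c)) ^ (ℓ - j) /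
            (Nat.factorial (ℓ - j) : ℝ)))) := by
  simpa only [poissonAddGeometricMass, sub_sub_cancel, ← Real.exp_nat_mul, mul_comm _ (-c)] using
    tendsto_unifProb_fixedPointCount_rttPerm hr ℓ

/-- **Theorem (fixed points, critical regime).** For `c > 0` and `r = ⌊cn⌋` iterated
random-to-top shuffles of an `n`-card deck started at the identity, the number of fixed
points converges in distribution to `X + Y` with `X ~ Poisson(1 - e⁻ᶜ)` and `Y` geometric
with `P(Y = k) = (1 - e⁻ᶜ) e^{-ck}`, independent; equivalently, the pmf converges pointwise
to that of the convolution. -/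
theorem rtt_fixedPoints_critical (c : ℝ) (hc : 0 < c) (ℓ : ℕ) :
    Tendsto
      (fun n : ℕ =>
        unifProb (fun s : Fin ⌊c * (n : ℝ)⌋₊ → Fin n =>
          fixedPointCount (rttPerm n ⌊c * (n : ℝ)⌋₊ s) = ℓ))
      atTop
      (𝓝 (∑ j ∈ Finset.range (ℓ + 1),
        (1 - Real.exp (-c)) * Real.exp (-c * j) *
          (Real.exp (-(1 - Real.exp (-c))) * (1 - Real.exp (-c)) ^ (ℓ - j) /
            (Nat.factorial (ℓ - j) : ℝ)))) := by
  exact rtt_fixedPoints_critical_general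
    ((tendsto_nat_floor_mul_div_atTop hc.le).comp tendsto_natCast_atTop_atTop) ℓ
end

section
/- Let (r_n) be a sequence of positive integers with r_n / n → ∞ as n → ∞. For each n, let F^{r_n}_n be the number of fixed points of the random permutation of [n] obtained by performing r_n iterated random-to-top shuffles starting from the identity. Then F^{r_n}_n converges in distribution, as n → ∞, to a Poisson random variable with mean 1; that is, for every integer ℓ ≥ 0, P(F^{r_n}_n = ℓ) → e^{−1}/ℓ!. -/
open MeasureTheory ProbabilityTheory Filter Finset Topology
open scoped NNReal

/-!
Couple the shuffle with a uniform permutation: choose the selections `s` and a permutation `σ`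
independently and uniformly. Then `σ ∘ s` is again a uniform sequence of selections, and
`σ * rttPerm n r s` is a uniform permutation. Relabelling the selections by `σ` relabels every
selected card without moving it, so `rttPerm n r (σ ∘ s)` and `σ * rttPerm n r s` can differ only
where `rttPerm n r s` shows an unselected card. Unselected cards lie below all the selected ones
in their original order, so an unselected card can be fixed by the shuffle only if the largest
card is unselected too. Hence the two fixed point counts agree unless `σ ∘ s` misses the largest
card, or `σ` sends some unselected card to its position. Each event has probability at most
`(1 - 1 / n) ^ r ≤ exp (-r / n)`, and the fixed point count of a uniform permutation is
asymptotically Poisson by the asymptotics of derangement numbers.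
-/

section UniformProbability

variable {α β : Type*} [Fintype α] [Fintype β]

theorem unifProb_eq_unifExpect (p : α → Prop) [DecidablePred p] :
    unifProb p = unifExpect fun x => if p x then 1 else 0 := by
  rw [unifProb, unifExpect, Nat.card_eq_fintype_card, Fintype.card_subtype, Finset.sum_boole]

theorem unifExpect_mono {f g : α → ℝ} (h : ∀ x, f x ≤ g x) : unifExpect f ≤ unifExpect g :=
  div_le_div_of_nonneg_right (Finset.sum_le_sum fun x _ => h x) (Nat.cast_nonneg _)

theorem unifExpect_sum {ι : Type*} (t : Finset ι) (f : ι → α → ℝ) :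
    unifExpect (fun x => ∑ i ∈ t, f i x) = ∑ i ∈ t, unifExpect (f i) := by
  simp only [unifExpect]
  rw [Finset.sum_comm, Finset.sum_div]

theorem unifProb_mono {p q : α → Prop} (h : ∀ x, p x → q x) : unifProb p ≤ unifProb q := by
  classical
  simp only [unifProb_eq_unifExpect]
  refine unifExpect_mono fun x => ?_
  by_cases hp : p x
  · simp only [hp, h x hp, if_true, le_refl]
  · rw [if_neg hp]
    positivity

theorem unifProb_true [Nonempty α] : unifProb (fun _ : α => True) = 1 := by
  simp [unifProb]

theorem unifProb_exists_le {ι : Type*} [Fintype ι] (p : ι → α → Prop) :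
    unifProb (fun x => ∃ i, p i x) ≤ ∑ i, unifProb (p i) := by
  classical
  simp only [unifProb_eq_unifExpect, ← unifExpect_sum]
  refine unifExpect_mono fun x => ?_
  split_ifs with h
  · obtain ⟨i, hi⟩ := h
    calc (1 : ℝ) = if p i x then 1 else 0 := (if_pos hi).symm
      _ ≤ ∑ i, if p i x then 1 else 0 :=
        Finset.single_le_sum (f := fun i => if p i x then (1 : ℝ) else 0)
          (fun i _ => by positivity) (Finset.mem_univ i)
  · positivity

theorem unifProb_or_le (p q : α → Prop) :
    unifProb (fun x => p x ∨ q x) ≤ unifProb p + unifProb q := by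
  simpa [Bool.exists_bool, add_comm, or_comm] using
    unifProb_exists_le fun b : Bool => if b then p else q

theorem abs_unifProb_sub_unifProb_le {p q b : α → Prop} (h : ∀ x, ¬ b x → (p x ↔ q x)) :
    |unifProb p - unifProb q| ≤ unifProb b := by
  have le_add {p q : α → Prop} (h : ∀ x, ¬ b x → (p x → q x)) :
      unifProb p ≤ unifProb q + unifProb b :=
    (unifProb_mono fun x hx => or_iff_not_imp_right.2 fun hb => h x hb hx).trans
      (unifProb_or_le q b)
  have hpq := le_add fun x hb => (h x hb).1
  have hqp := le_add fun x hb => (h x hb).2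
  exact abs_sub_le_iff.2 ⟨by linarith, by linarith⟩

theorem unifProb_comp_equiv (e : α ≃ β) (p : β → Prop) :
    unifProb (fun x => p (e x)) = unifProb p := by
  rw [unifProb, unifProb, Fintype.card_congr e,
    Nat.card_congr (e.subtypeEquiv (p := fun x => p (e x)) (q := p) fun _ => Iff.rfl)]

theorem unifProb_prod_eq_unifExpect (p : α × β → Prop) :
    unifProb p = unifExpect fun a => unifProb fun b => p (a, b) := by
  classical
  simp only [unifProb_eq_unifExpect, unifExpect, Fintype.sum_prod_type, Fintype.card_prod,
    Nat.cast_mul, div_mul_eq_div_div_swap, Finset.sum_div]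

theorem unifProb_prod_and (p : α → Prop) (q : α → β → Prop) {t : ℝ}
    (hq : ∀ a, unifProb (q a) = t) :
    unifProb (fun x : α × β => p x.1 ∧ q x.1 x.2) = unifProb p * t := by
  classical
  have fiber (a : α) : unifProb (fun b => p a ∧ q a b) = (if p a then 1 else 0) * t := by
    by_cases ha : p a <;> simp [ha, ← hq a, unifProb]
  rw [unifProb_prod_eq_unifExpect, unifProb_eq_unifExpect p]
  simp only [fiber, unifExpect, ← Finset.sum_mul, div_mul_eq_mul_div]

theorem unifProb_prod_of_forall_eq [Nonempty α] (q : α → β → Prop) {t : ℝ}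
    (hq : ∀ a, unifProb (q a) = t) : unifProb (fun x : α × β => q x.1 x.2) = t := by
  simpa [unifProb_true] using unifProb_prod_and (fun _ => True) q hq

theorem unifProb_mul_right {G : Type*} [Group G] [Fintype G] [Nonempty α] (f : α → G)
    (p : G → Prop) : unifProb (fun x : α × G => p (x.2 * f x.1)) = unifProb p :=
  unifProb_prod_of_forall_eq (fun a g => p (g * f a)) fun a =>
    unifProb_comp_equiv (Equiv.mulRight (f a)) p

theorem unifProb_perm_comp [DecidableEq α] [DecidableEq β] (p : (β → α) → Prop) :
    unifProb (fun x : (β → α) × Equiv.Perm α => p (x.2 ∘ x.1)) = unifProb p := by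
  rw [← unifProb_comp_equiv (Equiv.prodComm (Equiv.Perm α) (β → α))]
  exact unifProb_prod_of_forall_eq (fun (σ : Equiv.Perm α) s => p (σ ∘ s)) fun σ =>
    unifProb_comp_equiv (Equiv.arrowCongr (Equiv.refl β) σ) p

theorem unifProb_perm_apply_eq [DecidableEq α] (a b : α) :
    unifProb (fun σ : Equiv.Perm α => σ a = b) = 1 / Fintype.card α := by
  have : Nonempty α := ⟨a⟩
  have const (c : α) : unifProb (fun σ : Equiv.Perm α => σ a = c) =
      unifProb fun σ : Equiv.Perm α => σ a = b := by
    rw [← unifProb_comp_equiv (Equiv.mulLeft (Equiv.swap b c))]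
    simp [Equiv.swap_apply_eq_iff]
  have total : ∑ c, unifProb (fun σ : Equiv.Perm α => σ a = c) = 1 := by
    simp only [unifProb_eq_unifExpect, ← unifExpect_sum]
    simp [unifExpect]
  simp only [const, Finset.sum_const, Finset.card_univ, nsmul_eq_mul] at total
  exact eq_one_div_of_mul_eq_one_right total

theorem unifProb_notMem_range [DecidableEq β] (a : α) :
    unifProb (fun s : β → α => a ∉ Set.range s) =
      (1 - 1 / (Fintype.card α : ℝ)) ^ Fintype.card β := by
  classical
  have : Nonempty α := ⟨a⟩
  have avoiding : ({s : β → α | a ∉ Set.range s} : Finset (β → α)) =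
      Fintype.piFinset fun _ => Finset.univ.erase a := by
    ext s
    simp
  rw [unifProb, Nat.card_eq_fintype_card, Fintype.card_subtype, avoiding, Fintype.card_piFinset,
    one_sub_div (by positivity), div_pow]
  simp [Nat.cast_sub Fintype.card_pos]

theorem unifProb_exists_notMem_range_and_perm_apply_eq_le [DecidableEq α] [DecidableEq β]
    [Nonempty α] (f : (β → α) → α → α) :
    unifProb (fun x : (β → α) × Equiv.Perm α => ∃ a, a ∉ Set.range x.1 ∧ x.2 a = f x.1 a) ≤
      (1 - 1 / (Fintype.card α : ℝ)) ^ Fintype.card β := by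
  have single (a : α) :
      unifProb (fun x : (β → α) × Equiv.Perm α => a ∉ Set.range x.1 ∧ x.2 a = f x.1 a) =
        (1 - 1 / (Fintype.card α : ℝ)) ^ Fintype.card β * (1 / Fintype.card α) := by
    rw [unifProb_prod_and (fun s : β → α => a ∉ Set.range s) _
      fun s => unifProb_perm_apply_eq a (f s a), unifProb_notMem_range]
  refine (unifProb_exists_le _).trans_eq ?_
  rw [Finset.sum_congr rfl fun a _ => single a, Finset.sum_const, Finset.card_univ, nsmul_eq_mul,
    mul_left_comm, mul_one_div_cancel (by positivity), mul_one]

end UniformProbability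

section FixedPoints

theorem card_perm_fixedPoints_eq {α : Type*} [Fintype α] [DecidableEq α] (S : Finset α) :
    #{σ : Equiv.Perm α | ({i | σ i = i} : Finset α) = S} =
      numDerangements (Fintype.card α - #S) := by
  have e := Fintype.card_congr (derangements.subtypeEquiv (· ∉ S))
  rw [card_derangements_eq_numDerangements, Fintype.card_subtype_compl, Fintype.card_coe] at e
  rw [e, Fintype.card_subtype]
  congr 1
  ext σ
  simp [Finset.ext_iff, Function.IsFixedPt, iff_comm]

theorem card_perm_card_fixedPoints_eq {α : Type*} [Fintype α] [DecidableEq α] (ℓ : ℕ) :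
    #{σ : Equiv.Perm α | #{i | σ i = i} = ℓ} =
      (Fintype.card α).choose ℓ * numDerangements (Fintype.card α - ℓ) := by
  rw [Finset.card_eq_sum_card_fiberwise (f := fun σ => ({i | σ i = i} : Finset α))
      (t := Finset.powersetCard ℓ Finset.univ) fun σ hσ => by simpa using hσ,
    Finset.sum_const_nat (m := numDerangements (Fintype.card α - ℓ)), Finset.card_powersetCard,
    Finset.card_univ]
  intro S hS
  have hS : #S = ℓ := (Finset.mem_powersetCard.1 hS).2
  rw [← hS, ← card_perm_fixedPoints_eq, Finset.filter_filter]
  congr 1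
  ext σ
  simp +contextual

theorem unifProb_fixedPointCount_eq {n ℓ : ℕ} (h : ℓ ≤ n) :
    unifProb (fun σ : Equiv.Perm (Fin n) => fixedPointCount σ = ℓ) =
      numDerangements (n - ℓ) / (n - ℓ).factorial / ℓ.factorial := by
  have hchoose : ((n.choose ℓ : ℕ) : ℝ) ≠ 0 := by exact_mod_cast (Nat.choose_pos h).ne'
  simp only [unifProb, fixedPointCount]
  rw [Nat.card_eq_fintype_card, Fintype.card_subtype, card_perm_card_fixedPoints_eq,
    Fintype.card_perm, Fintype.card_fin, ← Nat.choose_mul_factorial_mul_factorial h]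
  push_cast
  field_simp

theorem tendsto_unifProb_fixedPointCount_eq (ℓ : ℕ) :
    Tendsto (fun n => unifProb fun σ : Equiv.Perm (Fin n) => fixedPointCount σ = ℓ) atTop
      (𝓝 (Real.exp (-1) / ℓ.factorial)) := by
  refine ((numDerangements_tendsto_inv_e.comp (tendsto_sub_atTop_nat ℓ)).div_const _).congr' ?_
  filter_upwards [eventually_ge_atTop ℓ] with n hn
  exact (unifProb_fixedPointCount_eq hn).symm

end FixedPoints

section Shuffle

variable {n r : ℕ}

theorem coe_cycleRange_apply (i j : Fin n) :
    (i.cycleRange j : ℕ) =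
      if (j : ℕ) < i then (j : ℕ) + 1 else if (j : ℕ) = i then 0 else j := by
  rcases lt_trichotomy j i with hji | rfl | hij
  · rw [Fin.coe_cycleRange_of_lt hji, if_pos (Fin.lt_def.1 hji)]
  · simp [Fin.coe_cycleRange_of_le]
  · rw [Fin.cycleRange_of_gt hij]
    split_ifs <;> omega

theorem cycleRange_lt_cycleRange {i j k : Fin n} (hk : k ≠ i) (h : j = i ∨ j < k) :
    i.cycleRange j < i.cycleRange k := by
  rw [Fin.lt_def, coe_cycleRange_apply, coe_cycleRange_apply]
  split_ifs <;> omega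

theorem rttPerm_inv_apply_succ (s : Fin (r + 1) → Fin n) (c : Fin n) :
    (rttPerm n (r + 1) s)⁻¹ c =
      ((rttPerm n r (Fin.init s))⁻¹ (s (Fin.last r))).cycleRange
        ((rttPerm n r (Fin.init s))⁻¹ c) := by
  have step : rttPerm n (r + 1) s = moveToTop (s (Fin.last r)) (rttPerm n r (Fin.init s)) := by
    rw [rttPerm, List.ofFn_succ', List.concat_eq_append, List.foldl_concat]
    rfl
  rw [step, moveToTop, mul_inv_rev, inv_inv, Equiv.Perm.mul_apply]

theorem mem_range_iff_init_or_last (s : Fin (r + 1) → Fin n) (c : Fin n) :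
    c ∈ Set.range s ↔ c ∈ Set.range (Fin.init s) ∨ c = s (Fin.last r) := by
  simp [Fin.exists_fin_succ', Fin.init_def, eq_comm]

theorem rttPerm_inv_apply_lt {s : Fin r → Fin n} {c d : Fin n} (hd : d ∉ Set.range s)
    (h : c ∈ Set.range s ∨ c < d) : (rttPerm n r s)⁻¹ c < (rttPerm n r s)⁻¹ d := by
  induction r with
  | zero => simpa [rttPerm] using h
  | succ r ih =>
    simp only [mem_range_iff_init_or_last, not_or] at hd h
    rw [rttPerm_inv_apply_succ, rttPerm_inv_apply_succ]
    refine cycleRange_lt_cycleRange ((Equiv.injective _).ne hd.2) ?_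
    rcases h with (hc | rfl) | hcd
    · exact .inr (ih hd.1 (.inl hc))
    · exact .inl rfl
    · exact .inr (ih hd.1 (.inr hcd))

theorem rttPerm_comp_inv_apply {m : ℕ} {σ : Fin n → Fin m} (hσ : Function.Injective σ)
    {s : Fin r → Fin n} {c : Fin n} (hc : c ∈ Set.range s) :
    ((rttPerm m r (σ ∘ s))⁻¹ (σ c) : ℕ) = (rttPerm n r s)⁻¹ c := by
  induction r generalizing c with
  | zero => simp at hc
  | succ r ih =>
    rw [rttPerm_inv_apply_succ, rttPerm_inv_apply_succ]
    change (((rttPerm m r (σ ∘ Fin.init s))⁻¹ (σ (s (Fin.last r)))).cycleRange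
      ((rttPerm m r (σ ∘ Fin.init s))⁻¹ (σ c)) : ℕ) = _
    rcases eq_or_ne c (s (Fin.last r)) with rfl | hne
    · simp only [coe_cycleRange_apply, lt_self_iff_false, if_false, if_true]
    have hc : c ∈ Set.range (Fin.init s) :=
      ((mem_range_iff_init_or_last s c).1 hc).resolve_right hne
    by_cases hlast : s (Fin.last r) ∈ Set.range (Fin.init s)
    · simp only [coe_cycleRange_apply, ih hc, ih hlast]
    have hσc : σ c ∈ Set.range (σ ∘ Fin.init s) := by
      rwa [Set.range_comp, hσ.mem_set_image]
    have hσlast : σ (s (Fin.last r)) ∉ Set.range (σ ∘ Fin.init s) := by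
      rwa [Set.range_comp, hσ.mem_set_image]
    rw [Fin.coe_cycleRange_of_lt (rttPerm_inv_apply_lt hσlast (.inl hσc)),
      Fin.coe_cycleRange_of_lt (rttPerm_inv_apply_lt hlast (.inl hc)), ih hc]

-- Otherwise `d` and all cards smaller than `c` lie above `c`, so `c` is too deep to be fixed.
theorem mem_range_of_rttPerm_apply_eq_self {s : Fin r → Fin n} {c d : Fin n}
    (hc : rttPerm n r s c = c) (hcd : c ≤ d) (hd : d ∈ Set.range s) : c ∈ Set.range s := by
  by_contra hc'
  have before : ∀ e ∈ insert d (Finset.Iio c), (rttPerm n r s)⁻¹ e ∈ Finset.Iio c := by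
    intro e he
    rw [Finset.mem_insert, Finset.mem_Iio] at he
    rw [Finset.mem_Iio]
    refine (rttPerm_inv_apply_lt hc' ?_).trans_eq (Equiv.Perm.inv_eq_iff_eq.2 hc.symm)
    exact he.imp_left fun hed => by rwa [hed]
  have := Finset.card_le_card_of_injOn _ before (Equiv.injective _).injOn
  rw [Finset.card_insert_of_notMem (by simpa using hcd)] at this
  omega

theorem fixedPointCount_rttPerm_comp {s : Fin r → Fin n} {σ : Equiv.Perm (Fin n)} {d : Fin n}
    (hd : IsTop d) (hds : d ∈ Set.range (σ ∘ s))
    (hσ : ∀ c ∉ Set.range s, σ c ≠ (rttPerm n r s)⁻¹ c) :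
    fixedPointCount (rttPerm n r (σ ∘ s)) = fixedPointCount (σ * rttPerm n r s) := by
  have relabel {c : Fin n} (hc : c ∈ Set.range s) :
      (rttPerm n r (σ ∘ s))⁻¹ (σ c) = (rttPerm n r s)⁻¹ c :=
    Fin.ext (rttPerm_comp_inv_apply σ.injective hc)
  rw [fixedPointCount, fixedPointCount]
  congr 1
  refine Finset.filter_congr fun i _ => ⟨fun hi => ?_, fun hi => ?_⟩
  · obtain ⟨j, hj⟩ := mem_range_of_rttPerm_apply_eq_self hi (hd i) hds
    have hpos : (rttPerm n r s)⁻¹ (s j) = i := by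
      rw [← relabel ⟨j, rfl⟩, Equiv.Perm.inv_eq_iff_eq, hi]
      exact hj
    rw [Equiv.Perm.mul_apply, ← Equiv.Perm.inv_eq_iff_eq.1 hpos]
    exact hj
  · rw [Equiv.Perm.mul_apply] at hi
    have hmem : rttPerm n r s i ∈ Set.range s := by
      by_contra hmem
      exact hσ _ hmem (by simpa using hi)
    have hpos := relabel hmem
    rw [hi, Equiv.Perm.inv_eq_iff_eq, Equiv.Perm.inv_eq_iff_eq.2 rfl] at hpos
    exact hpos.symm

theorem abs_unifProb_fixedPointCount_rttPerm_sub_le (n r : ℕ) [NeZero n] (p : ℕ → Prop) :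
    |unifProb (fun s : Fin r → Fin n => p (fixedPointCount (rttPerm n r s))) -
      unifProb (fun σ : Equiv.Perm (Fin n) => p (fixedPointCount σ))| ≤
        2 * (1 - 1 / (n : ℝ)) ^ r := by
  have unselected_top : unifProb (fun x : (Fin r → Fin n) × Equiv.Perm (Fin n) =>
      ⊤ ∉ Set.range (x.2 ∘ x.1)) = (1 - 1 / (n : ℝ)) ^ r := by
    simpa only [Fintype.card_fin] using
      (unifProb_perm_comp fun s : Fin r → Fin n => ⊤ ∉ Set.range s).trans (unifProb_notMem_range ⊤)
  have unselected_fixed : unifProb (fun x : (Fin r → Fin n) × Equiv.Perm (Fin n) =>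
      ∃ c, c ∉ Set.range x.1 ∧ x.2 c = (rttPerm n r x.1)⁻¹ c) ≤ (1 - 1 / (n : ℝ)) ^ r := by
    simpa only [Fintype.card_fin] using
      unifProb_exists_notMem_range_and_perm_apply_eq_le fun s : Fin r → Fin n =>
        ⇑(rttPerm n r s)⁻¹
  rw [← unifProb_perm_comp (β := Fin r) (α := Fin n),
    ← unifProb_mul_right (rttPerm n r) fun σ => p (fixedPointCount σ), two_mul]
  refine le_trans ?_ (add_le_add unselected_top.le unselected_fixed)
  refine (abs_unifProb_sub_unifProb_le fun x hx => ?_).trans (unifProb_or_le _ _)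
  push Not at hx
  rw [fixedPointCount_rttPerm_comp isTop_top hx.1 hx.2]

end Shuffle

theorem one_sub_one_div_pow_le_exp_neg (n r : ℕ) :
    (1 - 1 / (n : ℝ)) ^ r ≤ Real.exp (-((r : ℝ) / n)) := by
  have hn : 1 / (n : ℝ) ≤ 1 := by
    rw [one_div]
    exact Nat.cast_inv_le_one n
  calc (1 - 1 / (n : ℝ)) ^ r ≤ Real.exp (-(1 / (n : ℝ))) ^ r :=
        pow_le_pow_left₀ (sub_nonneg.2 hn) (Real.one_sub_le_exp_neg _) r
    _ = Real.exp (-((r : ℝ) / n)) := by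
        rw [← Real.exp_nat_mul]
        congr 1
        ring

/-- **Theorem (fixed points, mixed regime).** If `(r n)` are positive integers with
`r n / n → ∞`, then the number of fixed points after `r n` iterated random-to-top shuffles
of an `n`-card deck converges in distribution to `Poisson(1)`:
for every `ℓ`, `P(F = ℓ) → e⁻¹ / ℓ!`. -/
theorem rtt_fixedPoints_mixed (r : ℕ → ℕ) (hrpos : ∀ n, 0 < r n)
    (hr : Tendsto (fun n : ℕ => (r n : ℝ) / n) atTop atTop) (ℓ : ℕ) :
    Tendsto
      (fun n : ℕ =>
        unifProb (fun s : Fin (r n) → Fin n => fixedPointCount (rttPerm n (r n) s) = ℓ))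
      atTop
      (𝓝 (Real.exp (-1) / (Nat.factorial ℓ : ℝ))) := by
  have comparison : Tendsto (fun n =>
      unifProb (fun s : Fin (r n) → Fin n => fixedPointCount (rttPerm n (r n) s) = ℓ) -
        unifProb fun σ : Equiv.Perm (Fin n) => fixedPointCount σ = ℓ) atTop (𝓝 0) := by
    have bound : Tendsto (fun n => 2 * Real.exp (-((r n : ℝ) / n))) atTop (𝓝 0) := by
      simpa using (Real.tendsto_exp_neg_atTop_nhds_zero.comp hr).const_mul 2
    refine squeeze_zero_norm' ?_ bound
    filter_upwards [eventually_ge_atTop 1] with n hn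
    have : NeZero n := NeZero.of_pos hn
    exact (abs_unifProb_fixedPointCount_rttPerm_sub_le n (r n) (· = ℓ)).trans (by
      gcongr
      exact one_sub_one_div_pow_le_exp_neg n (r n))
  simpa using comparison.add (tendsto_unifProb_fixedPointCount_eq ℓ)
end

section
/- Fix a constant c > 0. For each n, let D^{⌊cn⌋}_n be the number of descents of the random permutation of [n] obtained by performing r = ⌊cn⌋ iterated random-to-top shuffles starting from the identity. Then (D^{⌊cn⌋}_n − n(1 − e^{−c})/2) / √n converges in distribution, as n → ∞, to a centered normal random variable with variance (1 + 2e^{−c} − 3(1+c)e^{−2c}) / 12. -/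
open MeasureTheory ProbabilityTheory Filter Finset Topology
open scoped NNReal

/-!
The final deck consists of the selected cards, the most recently selected first, followed by the
other cards in increasing order. Up to an error of at most one, the descents are therefore the
ascents of the list of distinct cards, ordered by their last selection; read in reverse time, that
list grows by one card whenever a selection hits an unseen card.

Let `Y` be the number of unseen cards and `R` the rank among them of the card seen last. A new card
has a uniform rank `m` among the `Y` unseen ones, and it creates an ascent exactly when `m < R`.
Hence `ascents + R / Y` grows, up to `O(1 / Y)`, by `m / Y - R / Y + 1_{m < R}`, which is `m / Y`
rotated by `-R / Y` on the circle: its law is that of `m / Y`, whatever `R` is. Adding the expected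
future growth, a multiple of `Y`, makes the process almost a martingale whose increments have a
variance depending on `Y` alone.

Since `Y / n` concentrates around `(1 - 1/n)^j` after `j` selections, the characteristic function of
the number of descents is, up to a small error, multiplied at each step by a deterministic Gaussian
factor. Summing the variances as geometric series gives the limit variance, and Lévy's continuity
theorem concludes.
-/

open scoped BigOperators

namespace RandomToTop

/-! ### Descents of the deck as ascents of a list of cards -/

section AdjacentCount

variable {α : Type*} (R : α → α → Prop) [DecidableRel R]

/-- The number of pairs of consecutive entries of a list that are related by `R`: descents for
`R = (· > ·)`, ascents for `R = (· < ·)`. -/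
def adjacentCount : List α → ℕ
  | [] => 0
  | [_] => 0
  | x :: y :: l => adjacentCount (y :: l) + if R x y then 1 else 0

lemma adjacentCount_append_pair (x y : α) : ∀ l : List α,
    adjacentCount R (l ++ [x, y]) = adjacentCount R (l ++ [x]) + if R x y then 1 else 0
  | [] => by simp [adjacentCount]
  | [z] => by simp [adjacentCount, add_comm]
  | z :: z' :: l => by
    have ih := adjacentCount_append_pair x y (z' :: l)
    simp only [List.cons_append] at ih ⊢
    rw [adjacentCount, adjacentCount, ih, add_right_comm]

lemma adjacentCount_reverse : ∀ l : List α,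
    adjacentCount R l.reverse = adjacentCount (fun x y => R y x) l
  | [] => rfl
  | [_] => rfl
  | x :: y :: l => by
    rw [adjacentCount, ← adjacentCount_reverse (y :: l)]
    simp [adjacentCount_append_pair]

variable {R} in
lemma adjacentCount_eq_zero_of_isChain : ∀ {l : List α},
    l.IsChain (fun x y => ¬R x y) → adjacentCount R l = 0
  | [], _ => rfl
  | [_], _ => rfl
  | x :: y :: l, h => by
    rw [List.isChain_cons_cons] at h
    rw [adjacentCount, adjacentCount_eq_zero_of_isChain h.2, if_neg h.1]

lemma adjacentCount_le_append : ∀ l l' : List α,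
    adjacentCount R l ≤ adjacentCount R (l ++ l')
  | [], _ => Nat.zero_le _
  | [_], _ => Nat.zero_le _
  | _ :: y :: l, l' => Nat.add_le_add_right (adjacentCount_le_append (y :: l) l') _

lemma adjacentCount_append_le : ∀ l l' : List α,
    adjacentCount R (l ++ l') ≤ adjacentCount R l + adjacentCount R l' + 1
  | [], l' => by simp [adjacentCount]
  | [x], [] => by simp [adjacentCount]
  | [x], y :: l' => by
    simp only [List.singleton_append, adjacentCount]
    split_ifs <;> omega
  | x :: y :: l, l' => by
    have ih := adjacentCount_append_le (y :: l) l'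
    simp only [List.cons_append, adjacentCount] at ih ⊢
    omega

lemma adjacentCount_ofFn : ∀ {n : ℕ} (f : Fin (n + 1) → α),
    adjacentCount R (List.ofFn f) = ∑ i : Fin n, if R (f i.castSucc) (f i.succ) then 1 else 0
  | 0, f => by simp [adjacentCount]
  | n + 1, f => by
    have ih := adjacentCount_ofFn (fun i => f i.succ)
    rw [List.ofFn_succ] at ih
    rw [List.ofFn_succ, List.ofFn_succ, adjacentCount, ih, Fin.sum_univ_succ, add_comm]
    rfl

end AdjacentCount

lemma descentCount_eq_adjacentCount {n : ℕ} (π : Equiv.Perm (Fin n)) :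
    descentCount π = adjacentCount (· > ·) (List.ofFn π) := by
  cases n with
  | zero => simp [descentCount, adjacentCount]
  | succ n =>
    rw [adjacentCount_ofFn, descentCount, ← Finset.card_filter]
    symm
    refine Finset.card_nbij (fun i => (i.castSucc, i.succ)) (by intro i; simp)
      (by intro i _ j _; simp) ?_
    rintro ⟨i, j⟩ h
    simp only [coe_filter, mem_univ, true_and, Set.mem_ofPred_eq] at h
    obtain ⟨k, rfl⟩ := Fin.exists_castSucc_eq.2 (show i ≠ Fin.last n by
      rintro rfl
      have hj := j.isLt
      rw [← h.1, Fin.val_last] at hj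
      omega)
    obtain rfl : k.succ = j := Fin.ext h.1
    exact ⟨k, by simpa using h.2, rfl⟩

lemma erase_ofFn_apply {α : Type*} [DecidableEq α] {n : ℕ} {f : Fin (n + 1) → α}
    (hf : f.Injective) (p : Fin (n + 1)) :
    (List.ofFn f).erase (f p) = List.ofFn (f ∘ p.succAbove) := by
  have hp : (p : ℕ) < (List.ofFn f).length := by simp [p.is_le]
  have hnodup := (List.nodup_ofFn.2 hf).erase_getElem p hp
  rw [List.getElem_ofFn] at hnodup
  rw [hnodup]
  refine List.ext_getElem (by simp [List.length_eraseIdx, p.is_le]) fun i _ _ => ?_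
  rw [List.getElem_eraseIdx]
  simp only [List.getElem_ofFn, Function.comp_apply, Fin.succAbove, Fin.lt_def, Fin.val_castSucc]
  split_ifs <;> rfl

lemma ofFn_moveToTop {n : ℕ} (c : Fin n) (π : Equiv.Perm (Fin n)) :
    List.ofFn (moveToTop c π) = c :: (List.ofFn π).erase c := by
  cases n with
  | zero => exact c.elim0
  | succ n =>
    have herase := erase_ofFn_apply π.injective (π⁻¹ c)
    rw [show π (π⁻¹ c) = c from π.apply_symm_apply c] at herase
    rw [herase, List.ofFn_succ]
    simp [moveToTop, Equiv.Perm.mul_apply, Equiv.Perm.inv_def, Function.comp_def]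

/-- `List.dedup` keeps the last occurrence of each entry, so `l.dedup.reverse` lists the selected
cards from the most recently to the least recently selected one. -/
lemma ofFn_foldl_moveToTop {n : ℕ} : ∀ (l : List (Fin n)) (π : Equiv.Perm (Fin n)),
    List.ofFn (l.foldl (fun π c => moveToTop c π) π : Equiv.Perm (Fin n)) =
      l.dedup.reverse ++ (List.ofFn π).filter (· ∉ l)
  | [], π => by simp
  | x :: l, π => by
    have hfilter : ((List.ofFn π).erase x).filter (· ∉ l) =
        (List.ofFn π).filter (· ∉ x :: l) := by
      rw [(List.nodup_ofFn.2 π.injective).erase_eq_filter, List.filter_filter]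
      exact List.filter_congr fun y _ => by by_cases y = x <;> simp_all
    rw [List.foldl_cons, ofFn_foldl_moveToTop l, ofFn_moveToTop]
    by_cases hx : x ∈ l
    · rw [List.dedup_cons_of_mem hx, List.filter_cons_of_neg (by simpa using hx), hfilter]
    · rw [List.dedup_cons_of_notMem hx, List.filter_cons_of_pos (by simpa using hx), hfilter]
      simp

lemma ofFn_rttPerm {n r : ℕ} (s : Fin r → Fin n) :
    List.ofFn (rttPerm n r s) =
      (List.ofFn s).dedup.reverse ++ (List.finRange n).filter (· ∉ List.ofFn s) := by
  rw [rttPerm, ofFn_foldl_moveToTop, Equiv.Perm.coe_one, List.ofFn_id]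

lemma adjacentCount_dedup_le_descentCount {n r : ℕ} (s : Fin r → Fin n) :
    adjacentCount (· < ·) (List.ofFn s).dedup ≤ descentCount (rttPerm n r s) := by
  rw [descentCount_eq_adjacentCount, ofFn_rttPerm, ← adjacentCount_reverse]
  exact adjacentCount_le_append _ _ _

lemma descentCount_le_adjacentCount_dedup {n r : ℕ} (s : Fin r → Fin n) :
    descentCount (rttPerm n r s) ≤ adjacentCount (· < ·) (List.ofFn s).dedup + 1 := by
  have hsorted : ((List.finRange n).filter (· ∉ List.ofFn s)).IsChain fun x y => ¬x > y :=
    (((List.pairwise_lt_finRange n).filter _).imp fun h => h.not_gt).isChain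
  rw [descentCount_eq_adjacentCount, ofFn_rttPerm]
  refine (adjacentCount_append_le _ _ _).trans_eq ?_
  rw [adjacentCount_eq_zero_of_isChain hsorted, add_zero, adjacentCount_reverse]

/-! ### The chain of selected cards -/

/-- The fraction `m / Y` rotated backwards by `R / Y` on the unit circle `ℝ / ℤ`, as an element of
`[0, 1]`; it is applied with `m < Y` and `R ≤ Y`. -/
noncomputable def rotatedFrac (Y R m : ℕ) : ℝ :=
  (if m < R then 1 else 0) + (m : ℝ) / Y - (R : ℝ) / Y

lemma rotatedFrac_mem_Icc {Y R m : ℕ} (hR : R ≤ Y) (hm : m < Y) :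
    rotatedFrac Y R m ∈ Set.Icc (0 : ℝ) 1 := by
  have hY : (0 : ℝ) < Y := by exact_mod_cast m.zero_le.trans_lt hm
  have hRY : (R : ℝ) / Y ≤ 1 := (div_le_one hY).2 (by exact_mod_cast hR)
  have hmY : (m : ℝ) / Y ≤ 1 := (div_le_one hY).2 (by exact_mod_cast hm.le)
  have hR0 : 0 ≤ (R : ℝ) / Y := by positivity
  have hm0 : 0 ≤ (m : ℝ) / Y := by positivity
  rw [rotatedFrac]
  split_ifs with h
  · have : (m : ℝ) / Y ≤ R / Y := by gcongr
    constructor <;> linarith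
  · have : (R : ℝ) / Y ≤ m / Y := by gcongr; exact not_lt.1 h
    constructor <;> linarith

lemma sum_range_comp_rotatedFrac {M : Type*} [AddCommMonoid M] {Y R : ℕ} (hR : R ≤ Y)
    (F : ℝ → M) :
    ∑ m ∈ range Y, F (rotatedFrac Y R m) = ∑ m ∈ range Y, F ((m : ℝ) / Y) := by
  obtain rfl | hY := Y.eq_zero_or_pos
  · simp
  obtain ⟨T, rfl⟩ := Nat.exists_eq_add_of_le hR
  have hne : ((R + T : ℕ) : ℝ) ≠ 0 := by exact_mod_cast hY.ne'
  have hlow : ∀ m ∈ range R, F (rotatedFrac (R + T) R m) = F ((T + m : ℕ) / (R + T : ℕ)) := by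
    intro m hm
    rw [rotatedFrac, if_pos (mem_range.1 hm)]
    congr 1
    field_simp
    push_cast
    ring
  have hhigh : ∀ m ∈ range T, F (rotatedFrac (R + T) R (R + m)) = F (m / (R + T : ℕ)) := by
    intro m _
    rw [rotatedFrac, if_neg (by omega)]
    congr 1
    push_cast
    ring
  rw [sum_range_add, sum_congr rfl hlow, sum_congr rfl hhigh, add_comm, ← sum_range_add,
    add_comm T R]

lemma expect_range_div_sub_half {Y : ℕ} (hY : Y ≠ 0) :
    𝔼 m ∈ range Y, ((m : ℝ) / Y - 1 / 2) = -1 / (2 * Y) := by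
  have hsum : ∀ k : ℕ, ∑ m ∈ range k, ((m : ℝ) / Y - 1 / 2) =
      (k : ℝ) * (k - 1) / (2 * Y) - k / 2 := by
    intro k
    induction k with
    | zero => simp
    | succ k ih =>
      rw [sum_range_succ, ih]
      push_cast
      field_simp
      ring
  rw [expect_eq_sum_div_card, hsum, card_range]
  field_simp
  ring

lemma expect_range_div_sub_half_sq {Y : ℕ} (hY : Y ≠ 0) :
    𝔼 m ∈ range Y, ((m : ℝ) / Y - 1 / 2) ^ 2 = 1 / 12 + 1 / (6 * (Y : ℝ) ^ 2) := by
  have hsum : ∀ k : ℕ, ∑ m ∈ range k, ((m : ℝ) / Y - 1 / 2) ^ 2 =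
      (k : ℝ) * (k - 1) * (2 * k - 1) / (6 * Y ^ 2) - (k : ℝ) * (k - 1) / (2 * Y) + k / 4 := by
    intro k
    induction k with
    | zero => simp
    | succ k ih =>
      rw [sum_range_succ, ih]
      push_cast
      field_simp
      ring
  rw [expect_eq_sum_div_card, hsum, card_range]
  field_simp
  ring

/-- The probability that a uniform selection from `n` cards misses a given card. -/
noncomputable def missProb (n : ℕ) : ℝ := 1 - 1 / n

lemma missProb_mem_Icc (n : ℕ) : missProb n ∈ Set.Icc (0 : ℝ) 1 := by
  rw [missProb, one_div]
  exact ⟨sub_nonneg.2 (Nat.cast_inv_le_one n), sub_le_self _ (by positivity)⟩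

lemma missProb_pow_mem_Icc (n k : ℕ) : missProb n ^ k ∈ Set.Icc (0 : ℝ) 1 := by
  obtain ⟨h₀, h₁⟩ := missProb_mem_Icc n
  exact ⟨pow_nonneg h₀ k, pow_le_one₀ h₀ h₁⟩

section Chain

variable {α : Type*} [Fintype α] [LinearOrder α] {L : List α} {w : ℝ} {x y : α}

/-- The cards that do not occur in a list. -/
def unseen (L : List α) : Finset α := L.toFinsetᶜ

/-- The number of unseen cards below the card `x`. -/
def unseenBelow (L : List α) (x : α) : ℕ := #{z ∈ unseen L | z < x}

/-- The number of unseen cards below the head of a list, which is the card seen last. -/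
def headRank : List α → ℕ
  | [] => 0
  | y :: L => unseenBelow (y :: L) y

/-- The proportion of unseen cards. -/
noncomputable def unseenFrac (L : List α) : ℝ := #(unseen L) / Fintype.card α

lemma mem_unseen : x ∈ unseen L ↔ x ∉ L := by simp [unseen]

lemma unseenFrac_mem_Icc (L : List α) : unseenFrac L ∈ Set.Icc (0 : ℝ) 1 :=
  ⟨by unfold unseenFrac; positivity,
    div_le_one_of_le₀ (by exact_mod_cast card_le_univ _) (Nat.cast_nonneg _)⟩

lemma card_unseen_cons (hx : x ∉ L) : #(unseen (x :: L)) + 1 = #(unseen L) := by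
  have herase : unseen (x :: L) = (unseen L).erase x := by ext; simp [unseen]
  rw [herase, card_erase_add_one (mem_unseen.2 hx)]

lemma unseenFrac_insert (L : List α) (x : α) :
    unseenFrac (L.insert x) =
      if x ∈ L then unseenFrac L else unseenFrac L - 1 / Fintype.card α := by
  split_ifs with hx
  · rw [List.insert_of_mem hx]
  · rw [List.insert_of_not_mem hx, unseenFrac, unseenFrac, ← card_unseen_cons hx]
    push_cast
    ring

lemma unseenBelow_lt_card (hx : x ∉ L) : unseenBelow L x < #(unseen L) :=
  card_lt_card <| filter_ssubset.2 ⟨x, mem_unseen.2 hx, lt_irrefl x⟩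

lemma unseenBelow_mono (L : List α) : Monotone (unseenBelow L) := fun _ _ h =>
  card_le_card <| monotone_filter_right _ fun _ _ (hz : _ < _) => hz.trans_le h

lemma unseenBelow_lt_unseenBelow (hx : x ∉ L) (h : x < y) :
    unseenBelow L x < unseenBelow L y := by
  refine card_lt_card ((ssubset_iff_of_subset ?_).2 ⟨x, ?_, ?_⟩)
  · exact monotone_filter_right _ fun _ _ (hz : _ < _) => hz.trans h
  · simp [h, mem_unseen.2 hx]
  · simp

lemma headRank_cons (L : List α) (x : α) : headRank (x :: L) = unseenBelow L x := by
  rw [headRank, unseenBelow, unseenBelow]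
  congr 1
  ext z
  simp only [mem_filter, mem_unseen, List.mem_cons, not_or]
  exact ⟨fun h => ⟨h.1.2, h.2⟩, fun h => ⟨⟨h.2.ne, h.1⟩, h.2⟩⟩

lemma headRank_le_card (L : List α) : headRank L ≤ #(unseen L) := by
  cases L with
  | nil => exact Nat.zero_le _
  | cons y L => exact card_filter_le _ _

lemma adjacentCount_lt_cons (hx : x ∉ L) :
    adjacentCount (· < ·) (x :: L) =
      adjacentCount (· < ·) L + if unseenBelow L x < headRank L then 1 else 0 := by
  cases L with
  | nil => simp [adjacentCount, headRank]
  | cons y L =>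
    have hiff : x < y ↔ unseenBelow (y :: L) x < unseenBelow (y :: L) y :=
      ⟨unseenBelow_lt_unseenBelow hx, (unseenBelow_mono _).reflect_lt⟩
    exact congrArg (adjacentCount (· < ·) (y :: L) + ·) (if_congr hiff rfl rfl)

lemma sum_unseen_comp_unseenBelow {M : Type*} [AddCommMonoid M] (L : List α) (F : ℕ → M) :
    ∑ x ∈ unseen L, F (unseenBelow L x) = ∑ m ∈ range #(unseen L), F m := by
  have hinj : Set.InjOn (unseenBelow L) (unseen L) :=
    StrictMonoOn.injOn fun x hx y _ => unseenBelow_lt_unseenBelow (mem_unseen.1 hx)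
  have himage : (unseen L).image (unseenBelow L) = range #(unseen L) := by
    refine eq_of_subset_of_card_le (image_subset_iff.2 fun x hx => ?_) ?_
    · exact mem_range.2 (unseenBelow_lt_card (mem_unseen.1 hx))
    · rw [card_range, card_image_of_injOn hinj]
  rw [← himage, sum_image hinj]

lemma expect_ite_mem [Nonempty α] (L : List α) (b : ℝ) (f : α → ℝ) :
    𝔼 x, (if x ∈ L then b else f x) =
      (1 - unseenFrac L) * b + (∑ x ∈ unseen L, f x) / Fintype.card α := by
  have hseen : ∑ x ∈ (unseen L)ᶜ, (if x ∈ L then b else f x) = #(unseen L)ᶜ * b := by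
    rw [sum_congr rfl fun x hx => if_pos (by simpa [unseen] using hx), sum_const, nsmul_eq_mul]
  have hunseen : ∑ x ∈ unseen L, (if x ∈ L then b else f x) = ∑ x ∈ unseen L, f x :=
    sum_congr rfl fun x hx => if_neg (mem_unseen.1 hx)
  rw [Fintype.expect_eq_sum_div_card, ← sum_add_sum_compl (unseen L), hseen, hunseen, card_compl,
    Nat.cast_sub (card_le_univ _), unseenFrac]
  field_simp
  ring

/-- The main part of the change of `potential` when the card `x` is selected in the state `L`. -/
noncomputable def increment (w : ℝ) (L : List α) (x : α) : ℝ :=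
  if x ∈ L then -(w * unseenFrac L) / 2
  else rotatedFrac #(unseen L) (headRank L) (unseenBelow L x) - 1 / 2 +
    w * (1 - unseenFrac L) / 2

/-- The variance of `increment w L` in the limit of many unseen cards, where `p = unseenFrac L`. -/
noncomputable def incrementVariance (w p : ℝ) : ℝ := p / 12 + w ^ 2 * p * (1 - p) / 4

lemma abs_increment_le_one (hw : w ∈ Set.Icc (0 : ℝ) 1) (L : List α) (x : α) :
    |increment w L x| ≤ 1 := by
  obtain ⟨hp₀, hp₁⟩ := unseenFrac_mem_Icc L
  have hwp₀ : 0 ≤ w * unseenFrac L := mul_nonneg hw.1 hp₀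
  have hwp₁ : w * unseenFrac L ≤ 1 := mul_le_one₀ hw.2 hp₀ hp₁
  have hwq₀ : 0 ≤ w * (1 - unseenFrac L) := mul_nonneg hw.1 (by linarith)
  have hwq₁ : w * (1 - unseenFrac L) ≤ 1 := mul_le_one₀ hw.2 (by linarith) (by linarith)
  rw [increment, abs_le]
  split_ifs with hx
  · constructor <;> linarith
  · obtain ⟨h₀, h₁⟩ := rotatedFrac_mem_Icc (headRank_le_card L) (unseenBelow_lt_card hx)
    constructor <;> linarith

/-- Rotating the uniformly distributed rank of a newly seen card by the rank of the previous one
leaves its distribution unchanged, so the increment does not depend in law on `headRank L`. -/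
lemma expect_comp_increment [Nonempty α] (w : ℝ) (L : List α) (F : ℝ → ℝ) :
    𝔼 x, F (increment w L x) = (1 - unseenFrac L) * F (-(w * unseenFrac L) / 2) +
      unseenFrac L * 𝔼 m ∈ range #(unseen L),
        F ((m : ℝ) / #(unseen L) - 1 / 2 + w * (1 - unseenFrac L) / 2) := by
  have hcard : (#(unseen L) : ℝ) * 𝔼 m ∈ range #(unseen L),
        F ((m : ℝ) / #(unseen L) - 1 / 2 + w * (1 - unseenFrac L) / 2) =
      ∑ m ∈ range #(unseen L), F ((m : ℝ) / #(unseen L) - 1 / 2 + w * (1 - unseenFrac L) / 2) := by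
    rw [← card_smul_expect, card_range, nsmul_eq_mul]
  simp only [increment, apply_ite F]
  rw [expect_ite_mem,
    sum_unseen_comp_unseenBelow L fun m =>
      F (rotatedFrac #(unseen L) (headRank L) m - 1 / 2 + w * (1 - unseenFrac L) / 2),
    sum_range_comp_rotatedFrac (headRank_le_card L) fun u =>
      F (u - 1 / 2 + w * (1 - unseenFrac L) / 2),
    ← hcard, unseenFrac, mul_div_right_comm]

lemma abs_expect_increment_le [Nonempty α] (w : ℝ) (L : List α) :
    |𝔼 x, increment w L x| ≤ 1 / (2 * Fintype.card α) := by
  obtain hY | hY := eq_or_ne #(unseen L) 0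
  · have := expect_comp_increment w L id
    simp_all [unseenFrac]
  have hexpect : 𝔼 x, increment w L x = -(1 / (2 * Fintype.card α)) := by
    rw [show (𝔼 x, increment w L x) = _ from expect_comp_increment w L id]
    simp only [id, expect_add_distrib, expect_range_div_sub_half hY,
      expect_const (nonempty_range_iff.2 hY), unseenFrac]
    field_simp
    ring
  rw [hexpect, abs_neg, abs_of_nonneg (by positivity)]

lemma abs_expect_increment_sq_sub_le [Nonempty α] (hw : w ∈ Set.Icc (0 : ℝ) 1) (L : List α) :
    |𝔼 x, increment w L x ^ 2 - incrementVariance w (unseenFrac L)| ≤ 1 / Fintype.card α := by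
  obtain hY | hY := eq_or_ne #(unseen L) 0
  · rw [expect_comp_increment w L (· ^ 2)]
    simp [hY, unseenFrac, incrementVariance]
  obtain ⟨hp₀, hp₁⟩ := unseenFrac_mem_Icc L
  have hexpand : ∀ m : ℕ, ((m : ℝ) / #(unseen L) - 1 / 2 + w * (1 - unseenFrac L) / 2) ^ 2 =
      ((m : ℝ) / #(unseen L) - 1 / 2) ^ 2 +
        w * (1 - unseenFrac L) * ((m : ℝ) / #(unseen L) - 1 / 2) +
        (w * (1 - unseenFrac L) / 2) ^ 2 := fun m => by ring
  have herror : 𝔼 x, increment w L x ^ 2 - incrementVariance w (unseenFrac L) =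
      (1 / (6 * #(unseen L)) - w * (1 - unseenFrac L) / 2) / Fintype.card α := by
    rw [expect_comp_increment w L (· ^ 2)]
    simp only [hexpand]
    simp only [expect_add_distrib, ← mul_expect, expect_range_div_sub_half hY,
      expect_range_div_sub_half_sq hY, expect_const (nonempty_range_iff.2 hY),
      incrementVariance, unseenFrac]
    field_simp
    ring
  have hYinv : 1 / (6 * (#(unseen L) : ℝ)) ≤ 1 := by
    have : (1 : ℝ) ≤ #(unseen L) := by exact_mod_cast Nat.one_le_iff_ne_zero.2 hY
    exact (div_le_one (by positivity)).2 (by linarith)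
  have hYinv₀ : 0 ≤ 1 / (6 * (#(unseen L) : ℝ)) := by positivity
  have hwq₀ : 0 ≤ w * (1 - unseenFrac L) := mul_nonneg hw.1 (by linarith)
  have hwq₁ : w * (1 - unseenFrac L) ≤ 1 := mul_le_one₀ hw.2 (by linarith) (by linarith)
  rw [herror, abs_div, Nat.abs_cast]
  gcongr
  exact abs_le.2 ⟨by linarith, by linarith⟩

/-- The number of ascents corrected by the rank of the head and by its expected growth, where
`w = missProb ^ k` and `k` is the number of selections still to come. -/
noncomputable def potential (w : ℝ) (L : List α) : ℝ :=
  adjacentCount (· < ·) L + (headRank L : ℝ) / #(unseen L) + (1 - w) * #(unseen L) / 2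

lemma potential_nil (w : ℝ) :
    potential w ([] : List α) = Fintype.card α * (1 - w) / 2 := by
  simp [potential, adjacentCount, headRank, unseen, mul_comm]

lemma potential_one_mem_Icc (L : List α) :
    potential 1 L ∈ Set.Icc (adjacentCount (· < ·) L : ℝ) (adjacentCount (· < ·) L + 1) := by
  have hle : (headRank L : ℝ) / #(unseen L) ≤ 1 :=
    div_le_one_of_le₀ (by exact_mod_cast headRank_le_card L) (Nat.cast_nonneg _)
  have hnonneg : 0 ≤ (headRank L : ℝ) / #(unseen L) := by positivity
  rw [potential]
  constructor <;> linarith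

lemma abs_div_add_one_sub_div_le {R Y : ℕ} (hR : R ≤ Y) :
    |(R : ℝ) / Y - R / (Y + 1)| ≤ 1 / (Y + 1) := by
  have hle : (R : ℝ) / Y ≤ 1 :=
    div_le_one_of_le₀ (by exact_mod_cast hR) (Nat.cast_nonneg _)
  have heq : (R : ℝ) / Y - R / (Y + 1) = R / Y * (1 / (Y + 1)) := by
    obtain rfl | hY := eq_or_ne Y 0
    · simp [Nat.le_zero.1 hR]
    · field_simp
      ring
  rw [heq, abs_of_nonneg (by positivity)]
  exact mul_le_of_le_one_left (by positivity) hle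

lemma abs_potential_insert_sub_le (w : ℝ) (L : List α) (x : α) :
    |potential w (L.insert x) -
        (potential (w * missProb (Fintype.card α)) L + increment w L x)| ≤
      if x ∈ L then 0 else 1 / (#(unseen L) : ℝ) := by
  split_ifs with hx
  · rw [List.insert_of_mem hx, increment, if_pos hx, abs_nonpos_iff]
    simp only [potential, missProb, unseenFrac]
    ring
  · rw [List.insert_of_not_mem hx, increment, if_neg hx]
    have hcard : (#(unseen L) : ℝ) = #(unseen (x :: L)) + 1 := by
      exact_mod_cast (card_unseen_cons hx).symm
    convert abs_div_add_one_sub_div_le (headRank_le_card (x :: L)) using 2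
    simp only [potential, adjacentCount_lt_cons hx, rotatedFrac, missProb, unseenFrac, hcard,
      headRank_cons]
    push_cast
    ring

lemma expect_abs_potential_insert_sub_le [Nonempty α] (w : ℝ) (L : List α) :
    𝔼 x, |potential w (L.insert x) -
        (potential (w * missProb (Fintype.card α)) L + increment w L x)| ≤
      1 / Fintype.card α := by
  refine (expect_le_expect fun x _ => abs_potential_insert_sub_le w L x).trans ?_
  rw [expect_ite_mem, mul_zero, zero_add, sum_const, nsmul_eq_mul, one_div]
  gcongr
  exact mul_inv_le_one

end Chain

/-! ### Characteristic functions of small random variables -/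

open Complex in
lemma norm_circleExp_add_sub_le (x y : ℝ) :
    ‖(Circle.exp (x + y) : ℂ) - Circle.exp x‖ ≤ |y| := by
  have hfactor : (Circle.exp (x + y) : ℂ) - Circle.exp x =
      Circle.exp x * (Complex.exp (I * y) - 1) := by
    rw [Circle.exp_add, Circle.coe_mul, Circle.coe_exp y, mul_comm I]
    ring
  rw [hfactor, norm_mul, Circle.norm_coe, one_mul]
  exact Real.norm_exp_I_mul_ofReal_sub_one_le

open Complex in
lemma norm_circleExp_sub_taylor_le (x : ℝ) :
    ‖(Circle.exp x : ℂ) - (1 + x * I - x ^ 2 / 2)‖ ≤ 4 * |x| ^ 3 := by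
  have hxI : ‖(x : ℂ) * I‖ = |x| := by simp
  obtain hx | hx := le_total |x| 1
  · have htaylor := Complex.exp_bound (hxI.trans_le hx) (n := 3) (by norm_num)
    rw [hxI] at htaylor
    have hsum : ∑ m ∈ range 3, ((x : ℂ) * I) ^ m / (m.factorial : ℂ) = 1 + x * I - x ^ 2 / 2 := by
      simp [sum_range_succ, mul_pow, sub_eq_add_neg, neg_div]
    rw [hsum, ← Circle.coe_exp] at htaylor
    refine htaylor.trans ?_
    rw [mul_comm]
    gcongr
    norm_num [Nat.factorial]
  · calc ‖(Circle.exp x : ℂ) - (1 + x * I - x ^ 2 / 2)‖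
        ≤ ‖(Circle.exp x : ℂ)‖ + (‖(1 : ℂ)‖ + ‖(x : ℂ) * I‖ + ‖(x : ℂ) ^ 2 / 2‖) :=
          (norm_sub_le _ _).trans
            (add_le_add_right ((norm_sub_le _ _).trans (add_le_add_left (norm_add_le _ _) _)) _)
      _ = 1 + (1 + |x| + |x| ^ 2 / 2) := by simp
      _ ≤ 4 * |x| ^ 3 := by nlinarith [mul_le_mul hx hx zero_le_one (abs_nonneg x)]

lemma abs_one_sub_sub_exp_neg_le {y : ℝ} (hy : 0 ≤ y) : |1 - y - Real.exp (-y)| ≤ y ^ 2 := by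
  have hlower : 1 - y ≤ Real.exp (-y) := Real.one_sub_le_exp_neg y
  have hupper : Real.exp (-y) ≤ (1 + y)⁻¹ := by
    rw [Real.exp_neg]
    gcongr
    linarith [Real.add_one_le_exp y]
  have hinv : (1 + y)⁻¹ ≤ 1 - y + y ^ 2 := by
    rw [inv_le_iff_one_le_mul₀ (by positivity)]
    nlinarith [pow_nonneg hy 3]
  rw [abs_le]
  constructor <;> linarith

lemma norm_expect_circleExp_sub_exp_le {ι : Type*} [Fintype ι] [Nonempty ι] {X : ι → ℝ}
    (hX : ∀ i, |X i| ≤ 1) (a : ℝ) {v : ℝ} (hv : 0 ≤ v) :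
    ‖𝔼 i, (Circle.exp (a * X i) : ℂ) - Real.exp (-(a ^ 2 * v / 2))‖ ≤
      |a| * |𝔼 i, X i| + a ^ 2 / 2 * |𝔼 i, X i ^ 2 - v| + 4 * |a| ^ 3 + (a ^ 2 * v / 2) ^ 2 := by
  have htaylor : ‖𝔼 i, ((Circle.exp (a * X i) : ℂ) -
      (1 + (a * X i : ℝ) * Complex.I - (a * X i : ℝ) ^ 2 / 2))‖ ≤ 4 * |a| ^ 3 := by
    refine (RCLike.norm_expect_le (K := ℂ)).trans (expect_le univ_nonempty fun i _ => ?_)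
    have haX : |a * X i| ≤ |a| := by
      rw [abs_mul]
      exact mul_le_of_le_one_right (abs_nonneg a) (hX i)
    refine (norm_circleExp_sub_taylor_le (a * X i)).trans ?_
    gcongr
  have hsplit : 𝔼 i, (Circle.exp (a * X i) : ℂ) - Real.exp (-(a ^ 2 * v / 2)) =
      𝔼 i, ((Circle.exp (a * X i) : ℂ) -
        (1 + (a * X i : ℝ) * Complex.I - (a * X i : ℝ) ^ 2 / 2)) +
      (a * 𝔼 i, X i : ℝ) * Complex.I - (a ^ 2 / 2 * (𝔼 i, X i ^ 2 - v) : ℝ) +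
      (1 - a ^ 2 * v / 2 - Real.exp (-(a ^ 2 * v / 2)) : ℝ) := by
    have hsq : ∀ i, ((a * X i : ℝ) : ℂ) ^ 2 / 2 = (a ^ 2 / 2 * X i ^ 2 : ℝ) := fun i => by
      push_cast
      ring
    simp only [hsq, expect_sub_distrib, expect_add_distrib, ← expect_mul, ← Complex.ofReal_expect,
      ← mul_expect, Fintype.expect_const]
    push_cast
    ring
  have hvariance : |a ^ 2 / 2 * (𝔼 i, X i ^ 2 - v)| = a ^ 2 / 2 * |𝔼 i, X i ^ 2 - v| := by
    rw [abs_mul, abs_of_nonneg (by positivity)]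
  have hexp := abs_one_sub_sub_exp_neg_le (y := a ^ 2 * v / 2) (by positivity)
  rw [hsplit]
  refine (norm_add_le_of_le (norm_sub_le_of_le (norm_add_le _ _) le_rfl) le_rfl).trans ?_
  rw [norm_mul, Complex.norm_I, mul_one, Complex.norm_real, Complex.norm_real, Complex.norm_real,
    Real.norm_eq_abs, Real.norm_eq_abs, Real.norm_eq_abs, abs_mul, hvariance]
  linarith

lemma norm_sub_prod_smul_le {𝕜 E : Type*} [NormedField 𝕜] [SeminormedAddCommGroup E]
    [NormedSpace 𝕜 E] {z : ℕ → E} {ρ : ℕ → 𝕜} {ε : ℝ} : ∀ {r : ℕ},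
    (∀ j < r, ‖ρ j‖ ≤ 1) → (∀ j < r, ‖z (j + 1) - ρ j • z j‖ ≤ ε) →
      ‖z r - (∏ j ∈ range r, ρ j) • z 0‖ ≤ r * ε
  | 0, _, _ => by simp
  | r + 1, hρ, hz => by
    have ih := norm_sub_prod_smul_le (fun j hj => hρ j (Nat.lt_succ_of_lt hj))
      (fun j hj => hz j (Nat.lt_succ_of_lt hj))
    calc ‖z (r + 1) - (∏ j ∈ range (r + 1), ρ j) • z 0‖
        = ‖(z (r + 1) - ρ r • z r) + ρ r • (z r - (∏ j ∈ range r, ρ j) • z 0)‖ := by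
          rw [prod_range_succ_comm, smul_sub, mul_smul, sub_add_sub_cancel]
      _ ≤ ε + 1 * (r * ε) := by
          refine norm_add_le_of_le (hz r r.lt_succ_self) (norm_smul_le _ _ |>.trans ?_)
          gcongr
          exact hρ r r.lt_succ_self
      _ = (r + 1 : ℕ) * ε := by
          push_cast
          ring

/-! ### The characteristic function of the number of descents -/

lemma expect_dedup_ofFn_succ {α M : Type*} [Fintype α] [DecidableEq α] [AddCommMonoid M]
    [Module ℚ≥0 M] (j : ℕ) (f : List α → M) :
    𝔼 s : Fin (j + 1) → α, f (List.ofFn s).dedup =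
      𝔼 s : Fin j → α, 𝔼 x, f ((List.ofFn s).dedup.insert x) := by
  have hcons : ∀ p : α × (Fin j → α), f ((List.ofFn p.2).dedup.insert p.1) =
      f (List.ofFn (Fin.consEquiv (fun _ => α) p)).dedup := by
    rintro ⟨x, s⟩
    congr 1
    by_cases hx : x ∈ List.ofFn s
    · simp [Fin.consEquiv, List.ofFn_succ, List.dedup_cons_of_mem hx, List.mem_dedup.2 hx]
    · rw [List.insert_of_not_mem (mt List.mem_dedup.1 hx), ← List.dedup_cons_of_notMem hx]
      simp [Fin.consEquiv, List.ofFn_succ]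
  rw [← Fintype.expect_equiv _ _ _ hcons, ← univ_product_univ,
    expect_product' univ univ fun x (s : Fin j → α) => f ((List.ofFn s).dedup.insert x),
    expect_comm]

lemma incrementVariance_mem_Icc {w p : ℝ} (hw : w ∈ Set.Icc (0 : ℝ) 1)
    (hp : p ∈ Set.Icc (0 : ℝ) 1) : incrementVariance w p ∈ Set.Icc (0 : ℝ) 1 := by
  obtain ⟨hp₀, hp₁⟩ := hp
  have hprod₁ : w ^ 2 * p * (1 - p) ≤ 1 :=
    mul_le_one₀ (mul_le_one₀ (pow_le_one₀ hw.1 hw.2) hp₀ hp₁) (by linarith) (by linarith)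
  have hprod₀ : 0 ≤ w ^ 2 * p * (1 - p) := mul_nonneg (by positivity) (by linarith)
  rw [incrementVariance]
  constructor <;> linarith

lemma abs_incrementVariance_sub_le {w p p' : ℝ} (hw : w ∈ Set.Icc (0 : ℝ) 1)
    (hp : p ∈ Set.Icc (0 : ℝ) 1) (hp' : p' ∈ Set.Icc (0 : ℝ) 1) :
    |incrementVariance w p - incrementVariance w p'| ≤ |p - p'| := by
  have hfactor : incrementVariance w p - incrementVariance w p' =
      (p - p') * (1 / 12 + w ^ 2 * (1 - p - p') / 4) := by
    unfold incrementVariance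
    ring
  have hslope : |w ^ 2 * (1 - p - p')| ≤ 1 := by
    rw [abs_mul, abs_sq]
    exact mul_le_one₀ (pow_le_one₀ hw.1 hw.2) (abs_nonneg _)
      (abs_le.2 ⟨by linarith [hp.2, hp'.2], by linarith [hp.1, hp'.1]⟩)
  rw [hfactor, abs_mul]
  refine mul_le_of_le_one_right (abs_nonneg _) ?_
  rw [abs_le] at hslope ⊢
  constructor <;> linarith

/-- The total variance accumulated by the increments along `r` selections from `n` cards when the
proportion of unseen cards follows its mean `missProb n ^ j`. -/
noncomputable def totalVariance (n r : ℕ) : ℝ :=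
  ∑ j ∈ range r, incrementVariance (missProb n ^ (r - 1 - j)) (missProb n ^ j)

section Average

variable {α : Type*} [Fintype α] [LinearOrder α] [Nonempty α]

lemma expect_sq_unseenFrac_insert_sub (L : List α) (m : ℝ) :
    𝔼 x, (unseenFrac (L.insert x) - m * missProb (Fintype.card α)) ^ 2 =
      missProb (Fintype.card α) ^ 2 * (unseenFrac L - m) ^ 2 +
        unseenFrac L * (1 - unseenFrac L) / Fintype.card α ^ 2 := by
  simp only [unseenFrac_insert, apply_ite (fun p => (p - m * missProb (Fintype.card α)) ^ 2)]
  rw [expect_ite_mem, sum_const, nsmul_eq_mul, mul_div_right_comm, ← unseenFrac, missProb]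
  field_simp
  ring

lemma expect_sq_unseenFrac_sub_le : ∀ j : ℕ,
    𝔼 s : Fin j → α, (unseenFrac (List.ofFn s).dedup - missProb (Fintype.card α) ^ j) ^ 2 ≤
      j / Fintype.card α ^ 2
  | 0 => by simp [unseenFrac, unseen]
  | j + 1 => by
    obtain ⟨hq₀, hq₁⟩ := missProb_mem_Icc (Fintype.card α)
    have hstep : ∀ L : List α,
        𝔼 x, (unseenFrac (L.insert x) - missProb (Fintype.card α) ^ (j + 1)) ^ 2 ≤
          (unseenFrac L - missProb (Fintype.card α) ^ j) ^ 2 + 1 / Fintype.card α ^ 2 := by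
      intro L
      obtain ⟨hp₀, hp₁⟩ := unseenFrac_mem_Icc L
      rw [pow_succ, expect_sq_unseenFrac_insert_sub]
      gcongr
      · exact mul_le_of_le_one_left (sq_nonneg _) (pow_le_one₀ hq₀ hq₁)
      · exact mul_le_one₀ hp₁ (by linarith) (by linarith)
    rw [expect_dedup_ofFn_succ j fun L =>
      (unseenFrac L - missProb (Fintype.card α) ^ (j + 1)) ^ 2]
    refine (expect_le_expect fun s _ => hstep _).trans ?_
    rw [expect_add_distrib, Fintype.expect_const, Nat.cast_succ, add_div]
    gcongr
    exact expect_sq_unseenFrac_sub_le j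

lemma expect_abs_unseenFrac_sub_le (j : ℕ) :
    𝔼 s : Fin j → α, |unseenFrac (List.ofFn s).dedup - missProb (Fintype.card α) ^ j| ≤
      √j / Fintype.card α := by
  have hcauchy := expect_mul_sq_le_sq_mul_sq univ
    (fun s : Fin j → α => |unseenFrac (List.ofFn s).dedup - missProb (Fintype.card α) ^ j|) 1
  simp only [Pi.one_apply, mul_one, one_pow, sq_abs, Fintype.expect_const] at hcauchy
  refine (Real.le_sqrt_of_sq_le (hcauchy.trans (expect_sq_unseenFrac_sub_le j))).trans_eq ?_
  rw [Real.sqrt_div (Nat.cast_nonneg j), Real.sqrt_sq (Nat.cast_nonneg _)]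

lemma norm_expect_circleExp_potential_sub_circleExp_increment_le (a w : ℝ) (L : List α) :
    ‖𝔼 x, ((Circle.exp (a * potential w (L.insert x)) : ℂ) -
        Circle.exp (a * (potential (w * missProb (Fintype.card α)) L + increment w L x)))‖ ≤
      |a| * (1 / Fintype.card α) := by
  refine (RCLike.norm_expect_le (K := ℂ)).trans ?_
  refine le_trans (expect_le_expect fun x _ => ?_)
    ((mul_expect univ _ |a|).ge.trans
      (mul_le_mul_of_nonneg_left (expect_abs_potential_insert_sub_le w L) (abs_nonneg a)))
  set y := potential (w * missProb (Fintype.card α)) L + increment w L x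
  rw [← abs_mul, mul_sub]
  have hdiff := norm_circleExp_add_sub_le (a * y) (a * potential w (L.insert x) - a * y)
  rwa [add_sub_cancel] at hdiff

lemma norm_expect_circleExp_potential_insert_sub_le (a : ℝ) {w p : ℝ}
    (hw : w ∈ Set.Icc (0 : ℝ) 1) (hp : p ∈ Set.Icc (0 : ℝ) 1) (L : List α) :
    ‖𝔼 x, (Circle.exp (a * potential w (L.insert x)) : ℂ) -
        Real.exp (-(a ^ 2 * incrementVariance w p / 2)) *
          Circle.exp (a * potential (w * missProb (Fintype.card α)) L)‖ ≤
      4 * |a| ^ 3 + a ^ 4 + (2 * |a| + a ^ 2) / Fintype.card α + a ^ 2 * |unseenFrac L - p| := by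
  set y := potential (w * missProb (Fintype.card α)) L
  obtain ⟨hv₀, hv₁⟩ := incrementVariance_mem_Icc hw hp
  have hpotential := norm_expect_circleExp_potential_sub_circleExp_increment_le a w L
  have hvariance : |𝔼 x, increment w L x ^ 2 - incrementVariance w p| ≤
      1 / Fintype.card α + |unseenFrac L - p| :=
    (abs_sub_le _ _ _).trans (add_le_add (abs_expect_increment_sq_sub_le hw L)
      (abs_incrementVariance_sub_le hw (unseenFrac_mem_Icc L) hp))
  have hsq : (a ^ 2 * incrementVariance w p / 2) ^ 2 ≤ a ^ 4 := by
    calc (a ^ 2 * incrementVariance w p / 2) ^ 2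
        = a ^ 4 * (incrementVariance w p / 2) ^ 2 := by ring
      _ ≤ a ^ 4 := mul_le_of_le_one_right (by positivity)
          (pow_le_one₀ (by linarith) (by linarith))
  have hincrement := norm_expect_circleExp_sub_exp_le (abs_increment_le_one hw L) a hv₀
  have hsplit : 𝔼 x, (Circle.exp (a * potential w (L.insert x)) : ℂ) -
      Real.exp (-(a ^ 2 * incrementVariance w p / 2)) * Circle.exp (a * y) =
      𝔼 x, ((Circle.exp (a * potential w (L.insert x)) : ℂ) -
        Circle.exp (a * (y + increment w L x))) +
      Circle.exp (a * y) * (𝔼 x, (Circle.exp (a * increment w L x) : ℂ) -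
        Real.exp (-(a ^ 2 * incrementVariance w p / 2))) := by
    simp only [expect_sub_distrib, mul_add, Circle.exp_add, Circle.coe_mul, ← mul_expect]
    ring
  rw [hsplit]
  refine (norm_add_le _ _).trans ?_
  rw [norm_mul, Circle.norm_coe, one_mul]
  calc _ ≤ |a| * (1 / Fintype.card α) + (|a| * (1 / (2 * Fintype.card α)) +
        a ^ 2 / 2 * (1 / Fintype.card α + |unseenFrac L - p|) + 4 * |a| ^ 3 + a ^ 4) := by
        refine add_le_add hpotential (hincrement.trans ?_)
        gcongr
        exact abs_expect_increment_le w L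
    _ = 4 * |a| ^ 3 + a ^ 4 + (2 * |a| + a ^ 2) / Fintype.card α + a ^ 2 * |unseenFrac L - p| -
        ((|a| + a ^ 2) / (2 * Fintype.card α) + a ^ 2 * |unseenFrac L - p| / 2) := by
        field_simp
        ring
    _ ≤ _ := sub_le_self _ (by positivity)

variable (α) in
/-- The characteristic function at `a` of the potential after `j` of `r` selections. -/
noncomputable def charFunPotential (r j : ℕ) (a : ℝ) : ℂ :=
  𝔼 s : Fin j → α,
    (Circle.exp (a * potential (missProb (Fintype.card α) ^ (r - j)) (List.ofFn s).dedup) : ℂ)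

/-- Error made in one step of the recursion for the characteristic function at frequency `a`, when
at most `r` cards have been selected out of `n`. -/
noncomputable def stepError (n r : ℕ) (a : ℝ) : ℝ :=
  4 * |a| ^ 3 + a ^ 4 + (2 * |a| + a ^ 2 + a ^ 2 * √r) / n

lemma norm_charFunPotential_succ_sub_le (a : ℝ) {j r : ℕ} (hj : j < r) :
    ‖charFunPotential α r (j + 1) a -
        Real.exp (-(a ^ 2 * incrementVariance (missProb (Fintype.card α) ^ (r - 1 - j))
          (missProb (Fintype.card α) ^ j) / 2)) * charFunPotential α r j a‖ ≤
      stepError (Fintype.card α) r a := by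
  rw [charFunPotential, charFunPotential,
    expect_dedup_ofFn_succ j fun L => (Circle.exp (a * potential _ L) : ℂ), mul_expect,
    ← expect_sub_distrib, show r - (j + 1) = r - 1 - j by omega,
    show r - j = r - 1 - j + 1 by omega, pow_succ]
  refine (RCLike.norm_expect_le (K := ℂ)).trans ((expect_le_expect fun s _ =>
    norm_expect_circleExp_potential_insert_sub_le a (missProb_pow_mem_Icc _ _)
      (missProb_pow_mem_Icc _ j) _).trans ?_)
  rw [expect_add_distrib, Fintype.expect_const, ← mul_expect, stepError, add_div _ (a ^ 2 * √r),
    ← add_assoc, mul_div_assoc (a ^ 2)]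
  gcongr
  refine (expect_abs_unseenFrac_sub_le j).trans ?_
  gcongr

lemma norm_charFunPotential_sub_le (a : ℝ) (r : ℕ) :
    ‖charFunPotential α r r a -
        Real.exp (-(a ^ 2 / 2 * totalVariance (Fintype.card α) r)) * Circle.exp
          (a * (Fintype.card α * (1 - missProb (Fintype.card α) ^ r) / 2))‖ ≤
      r * stepError (Fintype.card α) r a := by
  have hfactor : ∀ j < r, ‖(Real.exp (-(a ^ 2 * incrementVariance
      (missProb (Fintype.card α) ^ (r - 1 - j))
      (missProb (Fintype.card α) ^ j) / 2)) : ℂ)‖ ≤ 1 := by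
    intro j _
    have := (incrementVariance_mem_Icc (missProb_pow_mem_Icc (Fintype.card α) (r - 1 - j))
      (missProb_pow_mem_Icc (Fintype.card α) j)).1
    rw [Complex.norm_real, Real.norm_of_nonneg (Real.exp_pos _).le, Real.exp_le_one_iff,
      neg_nonpos]
    positivity
  have hbound := norm_sub_prod_smul_le (z := fun j => charFunPotential α r j a) hfactor
    fun j hj => norm_charFunPotential_succ_sub_le a hj
  have hprod : ∏ j ∈ range r, (Real.exp (-(a ^ 2 * incrementVariance
      (missProb (Fintype.card α) ^ (r - 1 - j)) (missProb (Fintype.card α) ^ j) / 2)) : ℂ) =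
      Real.exp (-(a ^ 2 / 2 * totalVariance (Fintype.card α) r)) := by
    rw [← Complex.ofReal_prod, ← Real.exp_sum, sum_neg_distrib, totalVariance, mul_sum]
    simp only [mul_div_right_comm]
  have hzero : charFunPotential α r 0 a =
      Circle.exp (a * (Fintype.card α * (1 - missProb (Fintype.card α) ^ r) / 2)) := by
    simp [charFunPotential, potential_nil]
  rwa [hprod, hzero] at hbound

end Average

lemma norm_expect_circleExp_descentCount_sub_le {n : ℕ} (hn : n ≠ 0) (r : ℕ) (a : ℝ) :
    ‖𝔼 s : Fin r → Fin n, (Circle.exp (a * descentCount (rttPerm n r s)) : ℂ) -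
        Real.exp (-(a ^ 2 / 2 * totalVariance n r)) *
          Circle.exp (a * (n * (1 - missProb n ^ r) / 2))‖ ≤
      |a| + r * stepError n r a := by
  have : NeZero n := ⟨hn⟩
  have hpotential : ∀ s : Fin r → Fin n,
      |descentCount (rttPerm n r s) - potential 1 (List.ofFn s).dedup| ≤ 1 := by
    intro s
    obtain ⟨h₀, h₁⟩ := potential_one_mem_Icc (List.ofFn s).dedup
    have hlower : (_ : ℝ) ≤ _ := Nat.cast_le.2 (adjacentCount_dedup_le_descentCount s)
    have hupper : (_ : ℝ) ≤ _ := Nat.cast_le.2 (descentCount_le_adjacentCount_dedup s)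
    rw [Nat.cast_succ] at hupper
    rw [abs_le]
    constructor <;> linarith
  have hdescents : ‖𝔼 s : Fin r → Fin n, ((Circle.exp (a * descentCount (rttPerm n r s)) : ℂ) -
      Circle.exp (a * potential 1 (List.ofFn s).dedup))‖ ≤ |a| := by
    refine (RCLike.norm_expect_le (K := ℂ)).trans (expect_le univ_nonempty fun s _ => ?_)
    have hdiff := norm_circleExp_add_sub_le (a * potential 1 (List.ofFn s).dedup)
      (a * descentCount (rttPerm n r s) - a * potential 1 (List.ofFn s).dedup)
    rw [add_sub_cancel, ← mul_sub, abs_mul] at hdiff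
    exact hdiff.trans (mul_le_of_le_one_right (abs_nonneg a) (hpotential s))
  have hchain := norm_charFunPotential_sub_le (α := Fin n) a r
  rw [expect_sub_distrib] at hdescents
  simp only [charFunPotential, Nat.sub_self, pow_zero, Fintype.card_fin] at hchain
  simpa only [sub_add_sub_cancel] using norm_add_le_of_le hdescents hchain

/-! ### Asymptotics -/

section Asymptotics

open Asymptotics

lemma totalVariance_nonneg (n r : ℕ) : 0 ≤ totalVariance n r :=
  sum_nonneg fun _ _ =>
    (incrementVariance_mem_Icc (missProb_pow_mem_Icc n _) (missProb_pow_mem_Icc n _)).1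

lemma totalVariance_div (n r : ℕ) :
    totalVariance n r / n = (1 - missProb n ^ r) / 12 + (missProb n ^ (r - 1) *
      (1 - missProb n ^ r) - r / n * (missProb n ^ (r - 1)) ^ 2) / 4 := by
  have hinv : (n : ℝ)⁻¹ = 1 - missProb n := by simp [missProb]
  have hterm : ∀ j ∈ range r, incrementVariance (missProb n ^ (r - 1 - j)) (missProb n ^ j) =
      missProb n ^ j / 12 + missProb n ^ (r - 1) / 4 * missProb n ^ (r - 1 - j) -
        (missProb n ^ (r - 1)) ^ 2 / 4 := by
    intro j hj
    rw [← Nat.sub_add_cancel (Nat.le_sub_one_of_lt (mem_range.1 hj)), pow_add,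
      Nat.add_sub_cancel, incrementVariance]
    ring
  have hgeom := geom_sum_mul_neg (missProb n) r
  rw [totalVariance, sum_congr rfl hterm, sum_sub_distrib, sum_add_distrib, ← sum_div,
    ← mul_sum, sum_range_reflect (missProb n ^ ·) r, sum_const, card_range, nsmul_eq_mul,
    div_eq_mul_inv, div_eq_mul_inv (r : ℝ), hinv]
  linear_combination (1 / 12 + missProb n ^ (r - 1) / 4) * hgeom

lemma abs_missProb_pow_sub_exp_le (n r : ℕ) :
    |missProb n ^ r - Real.exp (-(r / n))| ≤ r / n * (n : ℝ)⁻¹ := by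
  have hstep : |missProb n - Real.exp (-(n : ℝ)⁻¹)| ≤ (n : ℝ)⁻¹ ^ 2 := by
    rw [missProb, one_div]
    exact abs_one_sub_sub_exp_neg_le (by positivity)
  have hmax : max |missProb n| |Real.exp (-(n : ℝ)⁻¹)| ≤ 1 := by
    obtain ⟨h₀, h₁⟩ := missProb_mem_Icc n
    rw [abs_of_nonneg h₀, Real.abs_exp]
    exact max_le h₁ (Real.exp_le_one_iff.2 (by simp))
  calc |missProb n ^ r - Real.exp (-(r / n))|
      = |missProb n ^ r - Real.exp (-(n : ℝ)⁻¹) ^ r| := by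
        rw [← Real.exp_nat_mul, mul_neg, div_eq_mul_inv]
    _ ≤ |missProb n - Real.exp (-(n : ℝ)⁻¹)| * r *
        max |missProb n| |Real.exp (-(n : ℝ)⁻¹)| ^ (r - 1) := abs_pow_sub_pow_le ..
    _ ≤ (n : ℝ)⁻¹ ^ 2 * r * 1 := by
        gcongr
        exact pow_le_one₀ (le_max_of_le_left (abs_nonneg _)) hmax
    _ = r / n * (n : ℝ)⁻¹ := by ring

/-- The limit of `totalVariance n (r n) / n` when `r n / n → c`, that is, the asymptotic variance
of the rescaled number of descents. -/
noncomputable def limitVariance (c : ℝ) : ℝ :=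
  (1 + 2 * Real.exp (-c) - 3 * (1 + c) * Real.exp (-2 * c)) / 12

variable {c : ℝ} {r : ℕ → ℕ}

lemma tendsto_inv_sqrt_natCast : Tendsto (fun n : ℕ => (√(n : ℝ))⁻¹) atTop (𝓝 0) :=
  tendsto_inv_atTop_zero.comp (Real.tendsto_sqrt_atTop.comp tendsto_natCast_atTop_atTop)

lemma isLittleO_floor_mul_sub_mul {c : ℝ} (hc : 0 ≤ c) :
    (fun n : ℕ => ⌊c * n⌋₊ - c * n) =o[atTop] fun n : ℕ => √(n : ℝ) := by
  have hbound : (fun n : ℕ => ⌊c * n⌋₊ - c * n) =O[atTop] fun _ => (1 : ℝ) :=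
    .of_norm_le fun n => by
      rw [Real.norm_eq_abs, abs_sub_le_iff]
      constructor
      · linarith [Nat.floor_le (by positivity : 0 ≤ c * n)]
      · linarith [Nat.lt_floor_add_one (c * n)]
  exact hbound.trans_isLittleO (isLittleO_const_left.2 (.inr (tendsto_norm_atTop_atTop.comp
    (Real.tendsto_sqrt_atTop.comp tendsto_natCast_atTop_atTop))))

lemma isLittleO_natCast_inv_inv_sqrt :
    (fun n : ℕ => (n : ℝ)⁻¹) =o[atTop] fun n : ℕ => (√(n : ℝ))⁻¹ := by
  have h : (fun n : ℕ => (√(n : ℝ))⁻¹ * (√(n : ℝ))⁻¹) =o[atTop] fun n : ℕ => (√(n : ℝ))⁻¹ := by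
    simpa using ((isLittleO_one_iff ℝ).2 tendsto_inv_sqrt_natCast).mul_isBigO
      (isBigO_refl (fun n : ℕ => (√(n : ℝ))⁻¹) atTop)
  simpa only [← mul_inv, Real.mul_self_sqrt (Nat.cast_nonneg _)] using h

lemma isLittleO_div_natCast_sub (hr : (fun n => r n - c * n) =o[atTop] fun n : ℕ => √(n : ℝ)) :
    (fun n => r n / n - c) =o[atTop] fun n : ℕ => (√(n : ℝ))⁻¹ := by
  refine (hr.mul_isBigO (isBigO_refl (fun n : ℕ => (n : ℝ)⁻¹) atTop)).congr' ?_ ?_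
  · filter_upwards [eventually_ne_atTop 0] with n hn
    field_simp
  · exact .of_forall fun n => (div_eq_mul_inv _ _).symm.trans Real.sqrt_div_self

lemma tendsto_div_natCast (hr : (fun n => r n - c * n) =o[atTop] fun n : ℕ => √(n : ℝ)) :
    Tendsto (fun n => r n / n : ℕ → ℝ) atTop (𝓝 c) :=
  tendsto_sub_nhds_zero_iff.1 ((isLittleO_div_natCast_sub hr).trans_tendsto
    tendsto_inv_sqrt_natCast)

lemma isLittleO_missProb_pow_sub_exp
    (hr : (fun n => r n - c * n) =o[atTop] fun n : ℕ => √(n : ℝ)) :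
    (fun n => missProb n ^ r n - Real.exp (-c)) =o[atTop] fun n : ℕ => (√(n : ℝ))⁻¹ := by
  have hpow : (fun n => missProb n ^ r n - Real.exp (-(r n / n))) =o[atTop]
      fun n : ℕ => (√(n : ℝ))⁻¹ := by
    refine IsBigO.trans_isLittleO (g := fun n => r n / n * (n : ℝ)⁻¹) ?_ ?_
    · exact .of_norm_le fun n => abs_missProb_pow_sub_exp_le n (r n)
    · simpa using ((tendsto_div_natCast hr).isBigO_one ℝ).mul_isLittleO
        isLittleO_natCast_inv_inv_sqrt
  have hexp : (fun n => Real.exp (-(r n / n)) - Real.exp (-c)) =o[atTop]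
      fun n : ℕ => (√(n : ℝ))⁻¹ := by
    have hderiv : DifferentiableAt ℝ (fun x => Real.exp (-x)) c := by fun_prop
    exact (hderiv.isBigO_sub.comp_tendsto (tendsto_div_natCast hr)).trans_isLittleO
      (isLittleO_div_natCast_sub hr)
  simpa using hpow.add hexp

lemma tendsto_missProb_pow (hr : (fun n => r n - c * n) =o[atTop] fun n : ℕ => √(n : ℝ)) :
    Tendsto (fun n => missProb n ^ r n) atTop (𝓝 (Real.exp (-c))) :=
  tendsto_sub_nhds_zero_iff.1 ((isLittleO_missProb_pow_sub_exp hr).trans_tendsto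
    tendsto_inv_sqrt_natCast)

lemma tendsto_missProb_pow_pred
    (hr : (fun n => r n - c * n) =o[atTop] fun n : ℕ => √(n : ℝ)) :
    Tendsto (fun n => missProb n ^ (r n - 1)) atTop (𝓝 (Real.exp (-c))) := by
  have hdiff : Tendsto (fun n => missProb n ^ (r n - 1) - missProb n ^ r n) atTop (𝓝 0) := by
    refine squeeze_zero_norm (fun n => ?_) (tendsto_inv_atTop_nhds_zero_nat (𝕜 := ℝ))
    cases r n with
    | zero => simp
    | succ k =>
      obtain ⟨h₀, h₁⟩ := missProb_pow_mem_Icc n k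
      have hfactor : missProb n ^ k - missProb n ^ (k + 1) = missProb n ^ k * (n : ℝ)⁻¹ := by
        rw [missProb]
        ring
      rw [Nat.add_sub_cancel, hfactor, Real.norm_of_nonneg (by positivity)]
      exact mul_le_of_le_one_left (by positivity) h₁
  simpa using hdiff.add (tendsto_missProb_pow hr)

lemma tendsto_totalVariance_div
    (hr : (fun n => r n - c * n) =o[atTop] fun n : ℕ => √(n : ℝ)) :
    Tendsto (fun n => totalVariance n (r n) / n) atTop (𝓝 (limitVariance c)) := by
  have hq := tendsto_missProb_pow hr
  have hq' := tendsto_missProb_pow_pred hr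
  have hlim : limitVariance c = (1 - Real.exp (-c)) / 12 + (Real.exp (-c) *
      (1 - Real.exp (-c)) - c * Real.exp (-c) ^ 2) / 4 := by
    have hsq : Real.exp (-2 * c) = Real.exp (-c) ^ 2 := by
      rw [← Real.exp_nat_mul, Nat.cast_ofNat, neg_mul_comm]
    rw [limitVariance, hsq]
    ring
  simp_rw [totalVariance_div, hlim]
  exact ((hq.const_sub 1).div_const 12).add
    (((hq'.mul (hq.const_sub 1)).sub ((tendsto_div_natCast hr).mul (hq'.pow 2))).div_const 4)

lemma limitVariance_nonneg (hr : (fun n => r n - c * n) =o[atTop] fun n : ℕ => √(n : ℝ)) :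
    0 ≤ limitVariance c :=
  ge_of_tendsto' (tendsto_totalVariance_div hr) fun n =>
    div_nonneg (totalVariance_nonneg n (r n)) n.cast_nonneg

lemma tendsto_mul_stepError (hr : (fun n => r n - c * n) =o[atTop] fun n : ℕ => √(n : ℝ))
    (t : ℝ) :
    Tendsto (fun n => r n * stepError n (r n) (t / √n)) atTop (𝓝 0) := by
  have hx := tendsto_div_natCast hr
  have hh := tendsto_inv_sqrt_natCast
  have hlim : Tendsto (fun n : ℕ => (r n / n : ℝ) * (((4 * |t| ^ 3 + 2 * |t|) +
      t ^ 2 * √(r n / n)) * (√n)⁻¹ + (t ^ 4 + t ^ 2) * (√n)⁻¹ ^ 2)) atTop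
      (𝓝 (c * (((4 * |t| ^ 3 + 2 * |t|) + t ^ 2 * √c) * 0 + (t ^ 4 + t ^ 2) * 0 ^ 2))) :=
    hx.mul ((((hx.sqrt.const_mul _).const_add _).mul hh).add ((hh.pow 2).const_mul _))
  rw [mul_zero, zero_pow two_ne_zero, mul_zero, add_zero, mul_zero] at hlim
  refine hlim.congr' ?_
  filter_upwards [eventually_gt_atTop 0] with n hn
  have hk : 0 < √(n : ℝ) := Real.sqrt_pos.2 (Nat.cast_pos.2 hn)
  have hsq : (n : ℝ) = √n ^ 2 := (Real.sq_sqrt n.cast_nonneg).symm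
  rw [Real.sqrt_div' _ n.cast_nonneg, stepError, abs_div, abs_of_pos hk]
  generalize √(n : ℝ) = k at hk hsq ⊢
  rw [hsq]
  field_simp
  ring

lemma norm_expect_circleExp_descentCount_div_sqrt_sub_le {n : ℕ} (hn : n ≠ 0) (r : ℕ)
    (p t : ℝ) :
    ‖𝔼 s : Fin r → Fin n, (Circle.exp (t *
        ((descentCount (rttPerm n r s) - n * (1 - p) / 2) / √n)) : ℂ) -
      Real.exp (-(t ^ 2 / 2 * (totalVariance n r / n))) *
        Circle.exp (-(t / 2) * ((missProb n ^ r - p) / (√n)⁻¹))‖ ≤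
      |t / √n| + r * stepError n r (t / √n) := by
  set center : ℝ := n * (1 - p) / 2
  have hsq : √(n : ℝ) ^ 2 = n := Real.sq_sqrt n.cast_nonneg
  have hk : √(n : ℝ) ≠ 0 := by positivity
  have hdescents : 𝔼 s : Fin r → Fin n, (Circle.exp (t *
      ((descentCount (rttPerm n r s) - center) / √n)) : ℂ) =
      (𝔼 s : Fin r → Fin n, (Circle.exp (t / √n * descentCount (rttPerm n r s)) : ℂ)) *
        Circle.exp (-(t / √n * center)) := by
    rw [expect_mul]
    refine expect_congr rfl fun s _ => ?_
    rw [← Circle.coe_mul, ← Circle.exp_add]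
    ring_nf
  have hgauss : (Real.exp (-(t ^ 2 / 2 * (totalVariance n r / n))) : ℂ) *
      Circle.exp (-(t / 2) * ((missProb n ^ r - p) / (√n)⁻¹)) =
      Real.exp (-((t / √n) ^ 2 / 2 * totalVariance n r)) *
        Circle.exp (t / √n * (n * (1 - missProb n ^ r) / 2)) *
          Circle.exp (-(t / √n * center)) := by
    rw [mul_assoc, ← Circle.coe_mul, ← Circle.exp_add, div_pow, hsq]
    congr 4
    · ring
    · simp only [center]
      field_simp
      rw [hsq]
      ring
  rw [hdescents, hgauss, ← sub_mul, norm_mul, Circle.norm_coe, mul_one]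
  exact norm_expect_circleExp_descentCount_sub_le hn r (t / √n)

lemma tendsto_expect_circleExp_descentCount
    (hr : (fun n => r n - c * n) =o[atTop] fun n : ℕ => √(n : ℝ)) (t : ℝ) :
    Tendsto (fun n : ℕ => 𝔼 s : Fin (r n) → Fin n, (Circle.exp (t *
        ((descentCount (rttPerm n (r n) s) - n * (1 - Real.exp (-c)) / 2) / √n)) : ℂ))
      atTop (𝓝 (Real.exp (-(t ^ 2 / 2 * limitVariance c)) : ℂ)) := by
  set shift : ℕ → ℝ := fun n => -(t / 2) * ((missProb n ^ r n - Real.exp (-c)) / (√n)⁻¹)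
  have hshift : Tendsto shift atTop (𝓝 0) := by
    simpa only [mul_zero] using
      (isLittleO_missProb_pow_sub_exp hr).tendsto_div_nhds_zero.const_mul (-(t / 2))
  have hphase : Tendsto (fun n => (Circle.exp (shift n) : ℂ)) atTop (𝓝 1) := by
    have hcont : Continuous fun x => (Circle.exp x : ℂ) := by fun_prop
    simpa [Function.comp_def] using (hcont.tendsto 0).comp hshift
  have hvar : Tendsto (fun n : ℕ => (Real.exp (-(t ^ 2 / 2 * (totalVariance n (r n) / n))) : ℂ))
      atTop (𝓝 (Real.exp (-(t ^ 2 / 2 * limitVariance c)) : ℂ)) :=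
    (Complex.continuous_ofReal.tendsto _).comp ((Real.continuous_exp.tendsto _).comp
      ((tendsto_totalVariance_div hr).const_mul (t ^ 2 / 2)).neg)
  have herror : Tendsto (fun n : ℕ => |t / √n| + r n * stepError n (r n) (t / √n)) atTop
      (𝓝 0) := by
    simpa [div_eq_mul_inv] using
      (tendsto_inv_sqrt_natCast.const_mul t).abs.add (tendsto_mul_stepError hr t)
  have hgauss := hvar.mul hphase
  rw [mul_one] at hgauss
  refine hgauss.congr_dist (squeeze_zero' (.of_forall fun _ => dist_nonneg) ?_ herror)
  filter_upwards [eventually_ne_atTop 0] with n hn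
  rw [dist_comm, dist_eq_norm]
  exact norm_expect_circleExp_descentCount_div_sqrt_sub_le hn (r n) (Real.exp (-c)) t

end Asymptotics

/-! ### Convergence in distribution -/

lemma unifExpect_eq_expect {Ω : Type*} [Fintype Ω] (f : Ω → ℝ) : unifExpect f = 𝔼 ω, f ω := by
  rw [unifExpect, Fintype.expect_eq_sum_div_card]

lemma integral_map_uniformOfFintype {Ω 𝕜 : Type*} [Fintype Ω] [Nonempty Ω] [MeasurableSpace Ω]
    [MeasurableSingletonClass Ω] [RCLike 𝕜] (X : Ω → ℝ) {f : ℝ → 𝕜} (hf : Continuous f) :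
    ∫ x, f x ∂((PMF.uniformOfFintype Ω).toMeasure.map X) = 𝔼 ω, f (X ω) := by
  rw [integral_map (measurable_of_finite X).aemeasurable hf.aestronglyMeasurable,
    PMF.integral_eq_sum, Fintype.expect_eq_sum_div_card]
  simp [RCLike.real_smul_eq_coe_mul, ← mul_sum, div_eq_inv_mul]

lemma tendsto_unifExpect_of_tendsto_expect_circleExp {Ω : ℕ → Type*} [∀ n, Fintype (Ω n)]
    [∀ n, Nonempty (Ω n)] (X : ∀ n, Ω n → ℝ) (μ : ProbabilityMeasure ℝ)
    (hX : ∀ t : ℝ, Tendsto (fun n => 𝔼 ω, (Circle.exp (t * X n ω) : ℂ)) atTop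
      (𝓝 (charFun (μ : Measure ℝ) t)))
    (g : BoundedContinuousFunction ℝ ℝ) :
    Tendsto (fun n => unifExpect fun ω => g (X n ω)) atTop (𝓝 (∫ x, g x ∂μ)) := by
  let _ : ∀ n, MeasurableSpace (Ω n) := fun _ => ⊤
  have : ∀ n, MeasurableSingletonClass (Ω n) := fun _ => ⟨fun _ => trivial⟩
  let law : ℕ → ProbabilityMeasure ℝ := fun n =>
    ⟨(PMF.uniformOfFintype (Ω n)).toMeasure.map (X n),
      Measure.isProbabilityMeasure_map (measurable_of_finite _).aemeasurable⟩
  have hlaw : Tendsto law atTop (𝓝 μ) := by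
    refine ProbabilityMeasure.tendsto_of_tendsto_charFun fun t => (hX t).congr fun n => ?_
    rw [charFun_apply_real]
    simp only [← Complex.ofReal_mul, ← Circle.coe_exp]
    exact (integral_map_uniformOfFintype (X n) (f := fun x => (Circle.exp (t * x) : ℂ))
      (by fun_prop)).symm
  refine (ProbabilityMeasure.tendsto_iff_forall_integral_tendsto.1 hlaw g).congr fun n => ?_
  rw [unifExpect_eq_expect]
  exact integral_map_uniformOfFintype (X n) g.continuous

end RandomToTop

open RandomToTop Asymptotics

theorem rtt_descents_critical_general (c : ℝ) (r : ℕ → ℕ)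
    (hr : (fun n => r n - c * n) =o[atTop] fun n : ℕ => √(n : ℝ)) :
    ∀ g : BoundedContinuousFunction ℝ ℝ,
      Tendsto
        (fun n : ℕ =>
          unifExpect (fun s : Fin (r n) → Fin n =>
            g (((descentCount (rttPerm n (r n) s) : ℝ) -
                  (n : ℝ) * (1 - Real.exp (-c)) / 2) / Real.sqrt n)))
        atTop
        (𝓝 (∫ x, g x ∂(gaussianReal 0
          (Real.toNNReal ((1 + 2 * Real.exp (-c) - 3 * (1 + c) * Real.exp (-2 * c)) / 12))))) := by
  intro g
  rw [← tendsto_add_atTop_iff_nat 1]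
  refine tendsto_unifExpect_of_tendsto_expect_circleExp
    (Ω := fun n => Fin (r (n + 1)) → Fin (n + 1))
    (fun n s => (descentCount (rttPerm (n + 1) (r (n + 1)) s) -
      (n + 1 : ℕ) * (1 - Real.exp (-c)) / 2) / √(n + 1 : ℕ))
    ⟨gaussianReal 0 (limitVariance c).toNNReal, inferInstance⟩ (fun t => ?_) g
  have hchar : charFun (gaussianReal 0 (limitVariance c).toNNReal) t =
      Real.exp (-(t ^ 2 / 2 * limitVariance c)) := by
    rw [charFun_gaussianReal, Real.coe_toNNReal _ (limitVariance_nonneg hr)]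
    push_cast
    ring_nf
  rw [ProbabilityMeasure.coe_mk, hchar]
  exact (tendsto_expect_circleExp_descentCount hr t).comp (tendsto_add_atTop_nat 1)

/-- **Theorem (descents, critical regime).** For `c > 0` and `r = ⌊cn⌋` iterated
random-to-top shuffles of an `n`-card deck started at the identity,
`(D - n(1 - e⁻ᶜ)/2)/√n` converges in distribution (i.e. tested against every bounded
continuous function) to `N(0, (1 + 2e⁻ᶜ - 3(1+c)e⁻²ᶜ)/12)`. -/
theorem rtt_descents_critical (c : ℝ) (hc : 0 < c) :
    ∀ g : BoundedContinuousFunction ℝ ℝ,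
      Tendsto
        (fun n : ℕ =>
          unifExpect (fun s : Fin ⌊c * (n : ℝ)⌋₊ → Fin n =>
            g (((descentCount (rttPerm n ⌊c * (n : ℝ)⌋₊ s) : ℝ) -
                  (n : ℝ) * (1 - Real.exp (-c)) / 2) / Real.sqrt n)))
        atTop
        (𝓝 (∫ x, g x ∂(gaussianReal 0
          (Real.toNNReal ((1 + 2 * Real.exp (-c) - 3 * (1 + c) * Real.exp (-2 * c)) / 12))))) :=
  rtt_descents_critical_general c _ (isLittleO_floor_mul_sub_mul hc.le)
end
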